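/- Let (W,S) be a Coxeter system with S finite and twist-rigid, and let μ be a complete marking whose support J is non-spherical. Then there exists a finite sequence of markings μ = μ₀, μ₁, …, μₙ = μ' with common core such that μ₀,…,μₙ₋₁ are complete markings, each two consecutive markings are related by move M1, M2 or M4, move M4 occurring at most once and only as the last step, and μ' is a semi-complete marking whose support J' contains J. -/

import Mathlib

variable {B : Type*} {W : Type*} [Group W] {M : CoxeterMatrix B}

/-- A subset `J` of the index set is *spherical* if the corresponding simple reflections
generate a finite subgroup. -/
def Spherical (cs : CoxeterSystem M W) (J : Set B) : Prop :=
  (Subgroup.closure (cs.simple '' J) : Set W).Finite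

/-- Two indices are *adjacent* if the corresponding simple reflections generate a finite
subgroup. -/
def Adjacent (cs : CoxeterSystem M W) (i j : B) : Prop :=
  (Subgroup.closure {cs.simple i, cs.simple j} : Set W).Finite

/-- A subset is *2-spherical* if every pair of its elements is adjacent. -/
def TwoSpherical (cs : CoxeterSystem M W) (J : Set B) : Prop :=
  ∀ i ∈ J, ∀ j ∈ J, Adjacent cs i j

/-- A subset is *irreducible* if it cannot be partitioned into two nonempty subsets whose
corresponding simple reflections commute elementwise. -/
def IrreducibleSubset (cs : CoxeterSystem M W) (J : Set B) : Prop :=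
  ¬ ∃ K L : Set B, K.Nonempty ∧ L.Nonempty ∧ Disjoint K L ∧ K ∪ L = J ∧
      ∀ k ∈ K, ∀ l ∈ L, Commute (cs.simple k) (cs.simple l)

/-- `perpIn cs T J` is the set `J⊥` of elements of `T ∖ J` whose simple reflections commute
with those of every element of `J`. -/
def perpIn (cs : CoxeterSystem M W) (T J : Set B) : Set B :=
  {i ∈ T \ J | ∀ j ∈ J, Commute (cs.simple i) (cs.simple j)}

/-- A subset `T` of the index set is *connected* if any two of its elements are joined by a
path inside `T` whose edges are adjacent pairs. -/
def ConnectedIn (cs : CoxeterSystem M W) (T : Set B) : Prop :=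
  ∀ a ∈ T, ∀ b ∈ T,
    Relation.ReflTransGen (fun x y => x ∈ T ∧ y ∈ T ∧ Adjacent cs x y) a b

/-- A subset `T` is *twist-rigid* if for every irreducible spherical subset `L ⊆ T` the set
`T ∖ (L ∪ L⊥)` is connected, where `L⊥` is taken inside `T`. -/
def TwistRigidIn (cs : CoxeterSystem M W) (T : Set B) : Prop :=
  ∀ L ⊆ T, IrreducibleSubset cs L → Spherical cs L →
    ConnectedIn cs (T \ (L ∪ perpIn cs T L))

/-- A pair `(s, w)` is a *base* if `ℓ(w⁻¹ s w) = 2 ℓ(w) + 1` and every reflection `t` with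
`ℓ(t w) < ℓ(w)` generates together with `s` a finite subgroup. -/
def IsBase (cs : CoxeterSystem M W) (s : B) (w : W) : Prop :=
  cs.length (w⁻¹ * cs.simple s * w) = 2 * cs.length w + 1 ∧
    ∀ t : W, cs.IsReflection t → cs.length (t * w) < cs.length w →
      (Subgroup.closure {cs.simple s, t} : Set W).Finite

/-- `J` is the *support* of `(s, w)` if it is the smallest subset of the index set containing
`s` with `w ∈ W_J`. -/
def IsSupport (cs : CoxeterSystem M W) (s : B) (w : W) (J : Set B) : Prop :=
  s ∈ J ∧ w ∈ Subgroup.closure (cs.simple '' J) ∧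
    ∀ J' : Set B, s ∈ J' → w ∈ Subgroup.closure (cs.simple '' J') → J ⊆ J'

/-- A base `(s, w)` is *simple* if `w` is represented by a reduced word whose letters are
pairwise distinct and distinct from `s`. -/
def IsSimpleBase (cs : CoxeterSystem M W) (s : B) (w : W) : Prop :=
  IsBase cs s w ∧ ∃ l : List B, w = cs.wordProd l ∧ cs.length w = l.length ∧
    l.Nodup ∧ s ∉ l

/-- The *shadow* of a base `(s, w)` with support `J`: the set of `j ∈ J` with
`ℓ((wj)⁻¹ s (wj)) ≤ ℓ(w⁻¹ s w)`. -/
def shadow (cs : CoxeterSystem M W) (s : B) (w : W) (J : Set B) : Set B :=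
  {j ∈ J | cs.length ((w * cs.simple j)⁻¹ * cs.simple s * (w * cs.simple j)) ≤
    cs.length (w⁻¹ * cs.simple s * w)}

/-- A *marking* `((s, w), m)`: a base `(s, w)` together with its support `supp` and a marker
`m ∈ S ∖ supp⊥`. -/
structure Marking (cs : CoxeterSystem M W) where
  core : B
  elt : W
  marker : B
  supp : Set B
  isBase : IsBase cs core elt
  isSupport : IsSupport cs core elt supp
  marker_not_perp : marker ∉ perpIn cs Set.univ supp

variable {cs : CoxeterSystem M W}

/-- A marking is *complete* if `s · (w m w⁻¹)` has infinite order. -/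
def Marking.Complete (μ : Marking cs) : Prop :=
  ¬ IsOfFinOrder (cs.simple μ.core * (μ.elt * cs.simple μ.marker * μ.elt⁻¹))

/-- A marking is *semi-complete* if `J ∪ {m}` is irreducible, 2-spherical and
non-spherical. -/
def Marking.SemiComplete (μ : Marking cs) : Prop :=
  IrreducibleSubset cs (μ.supp ∪ {μ.marker}) ∧
    TwoSpherical cs (μ.supp ∪ {μ.marker}) ∧ ¬ Spherical cs (μ.supp ∪ {μ.marker})

/-- A marking is *simple* if its base is simple and its marker lies outside its support. -/
def Marking.Simple (μ : Marking cs) : Prop :=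
  IsSimpleBase cs μ.core μ.elt ∧ μ.marker ∉ μ.supp

/-- A *good* marking is a complete or semi-complete simple marking with spherical
support. -/
def Marking.Good (μ : Marking cs) : Prop :=
  (μ.Complete ∨ μ.SemiComplete) ∧ μ.Simple ∧ Spherical cs μ.supp

/-- Move N1: same core, same group element, adjacent markers. -/
def MoveN1 (μ μ' : Marking cs) : Prop :=
  μ.core = μ'.core ∧ μ.elt = μ'.elt ∧ Adjacent cs μ.marker μ'.marker

/-- Move M1: same core, same group element, adjacent markers, both markings complete. -/
def MoveM1 (μ μ' : Marking cs) : Prop :=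
  μ.core = μ'.core ∧ μ.elt = μ'.elt ∧ Adjacent cs μ.marker μ'.marker ∧
    μ.Complete ∧ μ'.Complete

/-- Move M2: same core, equal markers, and the group elements differ by one simple
reflection adjacent to the marker. -/
def MoveM2 (μ μ' : Marking cs) : Prop :=
  μ.core = μ'.core ∧ μ.marker = μ'.marker ∧
    ∃ j : B, (μ.elt = μ'.elt * cs.simple j ∨ μ'.elt = μ.elt * cs.simple j) ∧
      Adjacent cs μ.marker j

/-- Move M3: same core and `J ∪ {m} ∪ J' ∪ {m'}` is 2-spherical. -/
def MoveM3 (μ μ' : Marking cs) : Prop :=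
  μ.core = μ'.core ∧
    TwoSpherical cs (μ.supp ∪ {μ.marker} ∪ μ'.supp ∪ {μ'.marker})

/-- `K` is a maximal spherical subset of `J`. -/
def MaximalSphericalIn (cs : CoxeterSystem M W) (K J : Set B) : Prop :=
  K ⊆ J ∧ Spherical cs K ∧ ∀ L : Set B, K ⊆ L → L ⊆ J → Spherical cs L → L = K

/-- Move M4: same core, the first marking is complete, its marker commutes with some maximal
spherical subset of its support `J`, and `J = J' ∪ {m'}`. -/
def MoveM4 (μ μ' : Marking cs) : Prop :=
  μ.core = μ'.core ∧ μ.Complete ∧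
    (∃ K : Set B, MaximalSphericalIn cs K μ.supp ∧
      ∀ k ∈ K, Commute (cs.simple μ.marker) (cs.simple k)) ∧
    μ.supp = μ'.supp ∪ {μ'.marker}

/-!
In the geometric representation a base `(s, w)` corresponds to the positive root `w⁻¹ α_s`, whose
support is the support of the base, and the marking `((s, w), m)` is complete if and only if
`⟨w⁻¹ α_s, α_m⟩ ≤ -1`. In particular, a marker that is not adjacent to the whole support gives a
complete marking, and a marker that is adjacent to the whole non-spherical support gives a
semi-complete one.

Suppose that the marker of `μ` is not adjacent to some element of `J`. The `j ∈ J` with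
`0 ≤ ⟨w⁻¹ α_s, α_j⟩` form a spherical set; let `K` be a maximal spherical subset of `J` containing
it. If the marker commutes with `K`, then move M4 applies. Otherwise let `L` be a component of `K`
that contains an element not commuting with the marker. Twist-rigidity yields a path outside
`L ∪ L⊥` from the marker to an element of `J`. The marker moves along this path by M1 as long as
the markings remain complete; when the next vertex `q` would give an incomplete one, then
`-1 < ⟨w⁻¹ α_s, α_q⟩ < 0`, so that `(s, wq)` is a longer base, to which M2 leads. Since the length
of bases is bounded, this stops.
-/

namespace CoxeterGeometry

open Module Polynomial

section Dihedral

theorem sin_two_mul_pi_div_pos {m : ℕ} (hm : 3 ≤ m) : 0 < Real.sin (2 * (Real.pi / m)) := by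
  have hm' : (3 : ℝ) ≤ m := by exact_mod_cast hm
  have hmθ : m * (Real.pi / m) = Real.pi := mul_div_cancel₀ _ (by positivity)
  exact Real.sin_pos_of_pos_of_lt_pi (by positivity) (by nlinarith [Real.pi_pos])

theorem chebyshevS_eval_even_eq_zero {k : ℕ} (hk : 3 ≤ 2 * k) :
    (Chebyshev.S ℝ (k - 1 : ℤ)).eval (2 * Real.cos (2 * (Real.pi / (2 * k : ℕ)))) = 0 := by
  have hk0 : (k : ℝ) ≠ 0 := by exact_mod_cast (by omega : k ≠ 0)
  refine (mul_eq_zero.mp ((Chebyshev.S_two_mul_real_cos _ _).trans ?_)).resolve_right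
    (sin_two_mul_pi_div_pos hk).ne'
  rw [← Real.sin_pi]
  push_cast
  congr 1
  field_simp
  ring

theorem chebyshevS_eval_odd_add_eq_zero {k : ℕ} (hk : 3 ≤ 2 * k + 1) :
    (Chebyshev.S ℝ k).eval (2 * Real.cos (2 * (Real.pi / (2 * k + 1 : ℕ)))) +
      (Chebyshev.S ℝ (k - 1 : ℤ)).eval (2 * Real.cos (2 * (Real.pi / (2 * k + 1 : ℕ)))) = 0 := by
  refine (mul_eq_zero.mp ?_).resolve_right (sin_two_mul_pi_div_pos hk).ne'
  rw [add_mul, Chebyshev.S_two_mul_real_cos, Chebyshev.S_two_mul_real_cos]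
  set θ : ℝ := Real.pi / (2 * k + 1 : ℕ) with hθ
  have hkθ : (2 * k + 1) * θ = Real.pi := by rw [hθ]; push_cast; field_simp
  rw [show ((k : ℤ) + 1 : ℝ) * (2 * θ) = θ + Real.pi by rw [← hkθ]; push_cast; ring,
    show (((k - 1 : ℤ) : ℝ) + 1) * (2 * θ) = Real.pi - θ by rw [← hkθ]; push_cast; ring,
    Real.sin_add_pi, Real.sin_pi_sub, neg_add_cancel]

theorem reflection_mul_reflection_pow_eq_one {V : Type*} [AddCommGroup V] [Module ℝ V]
    {x y : V} {f g : Dual ℝ V} (hf : f x = 2) (hg : g y = 2) {m : ℕ} (hm : 2 ≤ m)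
    (hfy : f y = -2 * Real.cos (Real.pi / m)) (hgx : g x = -2 * Real.cos (Real.pi / m)) :
    (reflection hf * reflection hg) ^ m = 1 := by
  have ht : 2 * Real.cos (2 * (Real.pi / m)) = f y * g x - 2 := by
    rw [hfy, hgx, Real.cos_two_mul]; ring
  ext z
  rw [reflection_mul_reflection_pow_apply hf hg m z _ ht]
  change _ = z
  obtain rfl | hm : m = 2 ∨ 3 ≤ m := by omega
  · have hfy0 : f y = 0 := by simp [hfy]
    have hgx0 : g x = 0 := by simp [hgx]
    rw [show 2 * (Real.pi / (2 : ℕ)) = Real.pi by push_cast; ring, Real.cos_pi]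
    norm_num [hfy0, hgx0]
    module
  obtain ⟨k, rfl | rfl⟩ := m.even_or_odd'
  · have e₁ : ((2 * k : ℕ) - 2 : ℤ) / 2 = k - 1 := by omega
    have e₂ : ((2 * k : ℕ) - 1 : ℤ) / 2 = k - 1 := by omega
    simp only [e₁, e₂, chebyshevS_eval_even_eq_zero hm, zero_mul, zero_smul, add_zero]
  · have e₁ : ((2 * k + 1 : ℕ) - 1 : ℤ) / 2 = k := by omega
    have e₂ : ((2 * k + 1 : ℕ) - 3 : ℤ) / 2 = k - 1 := by omega
    have e₃ : ((2 * k + 1 : ℕ) : ℤ) / 2 = k := by omega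
    have e₄ : ((2 * k + 1 : ℕ) - 2 : ℤ) / 2 = k - 1 := by omega
    simp only [e₁, e₂, e₃, e₄, chebyshevS_eval_odd_add_eq_zero hm, mul_zero, zero_smul, add_zero]

end Dihedral

section GramForm

/-- The Gram entries `-cos (π / m)` of the canonical form of a Coxeter matrix. The order `∞` is
encoded as `M i j = 0`, and then the entry is `-cos 0 = -1` because `π / 0 = 0`. -/
noncomputable def gram (M : CoxeterMatrix B) (i j : B) : ℝ :=
  -Real.cos (Real.pi / M i j)

theorem gram_self (i : B) : gram M i i = 1 := by
  simp [gram]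

theorem gram_comm (i j : B) : gram M i j = gram M j i := by
  simp [gram, M.symmetric i j]

theorem gram_of_eq_zero {i j : B} (h : M i j = 0) : gram M i j = -1 := by
  simp [gram, h]

theorem two_le_order {i j : B} (hij : i ≠ j) (h : M i j ≠ 0) : 2 ≤ M i j := by
  have := M.off_diagonal i j hij
  omega

theorem gram_neg_of_ne_two {i j : B} (hij : i ≠ j) (h : M i j ≠ 2) : gram M i j < 0 := by
  by_cases h0 : M i j = 0
  · simp [gram_of_eq_zero h0]
  · have h2 : (2 : ℝ) < M i j := by
      exact_mod_cast (two_le_order hij h0).lt_of_ne' h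
    refine neg_neg_of_pos (Real.cos_pos_of_mem_Ioo ⟨?_, ?_⟩)
    · exact (neg_neg_of_pos (by positivity)).trans_le (by positivity)
    · exact div_lt_div_of_pos_left Real.pi_pos two_pos h2

theorem gram_nonpos {i j : B} (hij : i ≠ j) : gram M i j ≤ 0 := by
  by_cases h : M i j = 2
  · simp [gram, h]
  · exact (gram_neg_of_ne_two hij h).le

/-- The simple root `α i`, the basis vector of the geometric representation indexed by `i`. -/
noncomputable def simpleRoot (i : B) : B →₀ ℝ :=
  Finsupp.single i 1

theorem simpleRoot_apply_self (i : B) : simpleRoot i i = 1 :=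
  Finsupp.single_eq_same

theorem simpleRoot_apply_of_ne {i j : B} (h : j ≠ i) : simpleRoot i j = 0 :=
  Finsupp.single_eq_of_ne h

/-- The canonical symmetric bilinear form of a Coxeter matrix, with Gram matrix `gram M` in the
basis of simple roots. -/
noncomputable def form (M : CoxeterMatrix B) : LinearMap.BilinForm ℝ (B →₀ ℝ) :=
  Finsupp.linearCombination ℝ fun i ↦ Finsupp.linearCombination ℝ (gram M i)

theorem form_simpleRoot_right (v : B →₀ ℝ) (j : B) :
    form M v (simpleRoot j) = v.sum fun i a ↦ a * gram M i j := by
  simp [form, simpleRoot, Finsupp.linearCombination_apply, Finsupp.sum]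

theorem form_simpleRoot_simpleRoot (i j : B) :
    form M (simpleRoot i) (simpleRoot j) = gram M i j := by
  simp [form, simpleRoot]

theorem form_simpleRoot_self (i : B) : form M (simpleRoot i) (simpleRoot i) = 1 := by
  rw [form_simpleRoot_simpleRoot, gram_self]

theorem form_comm (x y : B →₀ ℝ) : form M x y = form M y x := by
  suffices form M = (form M).flip from congr($this x y)
  ext i j
  simpa [form] using gram_comm i j

/-- The functional `2⟨v, ·⟩`, which is the coroot of a vector `v` with `⟨v, v⟩ = 1`. -/
noncomputable def coroot (M : CoxeterMatrix B) (v : B →₀ ℝ) : Dual ℝ (B →₀ ℝ) :=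
  (2 : ℝ) • form M v

theorem coroot_apply (v x : B →₀ ℝ) : coroot M v x = 2 * form M v x := rfl

theorem coroot_simpleRoot_self (i : B) : coroot M (simpleRoot i) (simpleRoot i) = 2 := by
  rw [coroot_apply, form_simpleRoot_self, mul_one]

theorem coroot_simpleRoot_simpleRoot (i j : B) :
    coroot M (simpleRoot i) (simpleRoot j) = -2 * Real.cos (Real.pi / M i j) := by
  rw [coroot_apply, form_simpleRoot_simpleRoot, gram]
  ring

end GramForm

section GeometricRepresentation

theorem isLiftable_reflection (M : CoxeterMatrix B) :
    M.IsLiftable fun i ↦ reflection (coroot_simpleRoot_self (M := M) i) := by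
  intro i j
  by_cases h0 : M i j = 0
  · rw [h0, pow_zero]
  obtain rfl | hij := eq_or_ne i j
  · rw [M.diagonal, pow_one, mul_eq_one_iff_eq_inv, reflection_inv]
  · refine reflection_mul_reflection_pow_eq_one _ _ (two_le_order hij h0)
      (coroot_simpleRoot_simpleRoot i j) ?_
    rw [coroot_simpleRoot_simpleRoot, M.symmetric]

/-- The geometric (Tits) representation, in which `s i` acts as the reflection in `α i`. -/
noncomputable def geomRep (cs : CoxeterSystem M W) : W →* ((B →₀ ℝ) ≃ₗ[ℝ] (B →₀ ℝ)) :=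
  cs.lift ⟨_, isLiftable_reflection M⟩

variable (cs : CoxeterSystem M W)

theorem geomRep_simple (i : B) :
    geomRep cs (cs.simple i) = reflection (coroot_simpleRoot_self (M := M) i) :=
  cs.lift_apply_simple (isLiftable_reflection M) i

theorem geomRep_simple_apply (i : B) (x : B →₀ ℝ) :
    geomRep cs (cs.simple i) x = x - (2 * form M (simpleRoot i) x) • simpleRoot i := by
  rw [geomRep_simple, reflection_apply, coroot_apply]

theorem geomRep_simple_simpleRoot (i : B) :
    geomRep cs (cs.simple i) (simpleRoot i) = -simpleRoot i := by
  rw [geomRep_simple, reflection_apply_self]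

theorem geomRep_simple_apply_of_ne (x : B →₀ ℝ) {i j : B} (h : j ≠ i) :
    geomRep cs (cs.simple i) x j = x j := by
  simp [geomRep_simple_apply, simpleRoot_apply_of_ne h]

theorem geomRep_mul_apply (u w : W) (x : B →₀ ℝ) :
    geomRep cs (u * w) x = geomRep cs u (geomRep cs w x) := by
  rw [map_mul, LinearEquiv.mul_apply]

theorem geomRep_inv_apply_apply (w : W) (x : B →₀ ℝ) :
    geomRep cs w⁻¹ (geomRep cs w x) = x := by
  rw [← geomRep_mul_apply, inv_mul_cancel, map_one]; rfl

theorem geomRep_apply_inv_apply (w : W) (x : B →₀ ℝ) :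
    geomRep cs w (geomRep cs w⁻¹ x) = x := by
  rw [← geomRep_mul_apply, mul_inv_cancel, map_one]; rfl

theorem form_geomRep_geomRep (w : W) (x y : B →₀ ℝ) :
    form M (geomRep cs w x) (geomRep cs w y) = form M x y := by
  induction w using cs.simple_induction_left with
  | one => simp
  | mul_simple_left w i ih =>
    simp only [geomRep_mul_apply, geomRep_simple_apply, map_sub, map_smul, LinearMap.sub_apply,
      LinearMap.smul_apply, smul_eq_mul, form_simpleRoot_self, ih]
    rw [form_comm (geomRep cs w x) (simpleRoot i)]
    ring

theorem form_geomRep_left (w : W) (x y : B →₀ ℝ) :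
    form M (geomRep cs w x) y = form M x (geomRep cs w⁻¹ y) := by
  rw [← form_geomRep_geomRep cs w x, geomRep_apply_inv_apply]

end GeometricRepresentation

section Gap

/-- Real numbers that are `0` or at least `1`, the possible coefficients of a positive root. -/
def Gapped (a : ℝ) : Prop :=
  a = 0 ∨ 1 ≤ a

theorem Gapped.nonneg {a : ℝ} (h : Gapped a) : 0 ≤ a := by
  rcases h with rfl | h <;> linarith

theorem Gapped.one_le {a : ℝ} (h : Gapped a) (ha : a ≠ 0) : 1 ≤ a :=
  h.resolve_left ha

theorem Gapped.add {a b : ℝ} (ha : Gapped a) (hb : Gapped b) : Gapped (a + b) := by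
  rcases ha with rfl | ha
  · rwa [zero_add]
  · exact Or.inr (by linarith [hb.nonneg])

theorem Gapped.mul {a b : ℝ} (ha : Gapped a) (hb : Gapped b) : Gapped (a * b) := by
  rcases ha with rfl | ha
  · exact Or.inl (zero_mul b)
  rcases hb with rfl | hb
  · exact Or.inl (mul_zero a)
  · exact Or.inr (one_le_mul_of_one_le_of_one_le ha hb)

/-- Positivity of a vector, in the strong form satisfied by positive roots: every nonzero
coefficient in the basis of simple roots is at least `1`. -/
def Positive (v : B →₀ ℝ) : Prop :=
  ∀ i, Gapped (v i)

theorem positive_simpleRoot (i : B) : Positive (simpleRoot i) := by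
  intro j
  obtain rfl | h := eq_or_ne j i
  · exact Or.inr (simpleRoot_apply_self j).ge
  · exact Or.inl (simpleRoot_apply_of_ne h)

theorem Positive.smul_add_smul {x y : B →₀ ℝ} (hx : Positive x) (hy : Positive y) {a b : ℝ}
    (ha : Gapped a) (hb : Gapped b) : Positive (a • x + b • y) :=
  fun i ↦ (ha.mul (hx i)).add (hb.mul (hy i))

theorem Positive.nonneg {v : B →₀ ℝ} (h : Positive v) (i : B) : 0 ≤ v i :=
  (h i).nonneg

theorem Positive.not_positive_neg {v : B →₀ ℝ} (h : Positive v) (hv : v ≠ 0) :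
    ¬ Positive (-v) := fun hneg ↦ hv <| Finsupp.ext fun i ↦
  le_antisymm (neg_nonneg.mp (hneg.nonneg i)) (h.nonneg i)

end Gap

section Dihedral

open CoxeterSystem

theorem sin_le_sin_of_le_of_le_pi_sub {x y : ℝ} (hx : 0 ≤ x) (hxy : x ≤ y)
    (hy : y ≤ Real.pi - x) : Real.sin x ≤ Real.sin y := by
  obtain h | h := le_total y (Real.pi / 2)
  · exact Real.sin_le_sin_of_le_of_le_pi_div_two (by linarith [Real.pi_pos]) h hxy
  · rw [← Real.sin_pi_sub y]
    exact Real.sin_le_sin_of_le_of_le_pi_div_two (by linarith [Real.pi_pos]) (by linarith)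
      (by linarith)

theorem gapped_chebyshevS_eval {s t : B} (hst : s ≠ t) {n : ℕ} (hn : M s t = 0 ∨ n ≤ M s t) :
    Gapped ((Chebyshev.S ℝ (n - 1 : ℤ)).eval (-2 * gram M s t)) := by
  by_cases h0 : M s t = 0
  · rw [gram_of_eq_zero h0, show (-2 * -1 : ℝ) = 2 by norm_num, Chebyshev.S_eval_two]
    push_cast
    rw [sub_add_cancel]
    exact n.eq_zero_or_pos.imp (by exact_mod_cast ·) (by exact_mod_cast ·)
  have hm : 2 ≤ M s t := two_le_order hst h0
  replace hn := hn.resolve_left h0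
  rw [gram, show -2 * -Real.cos (Real.pi / M s t) = 2 * Real.cos (Real.pi / M s t) by ring]
  set θ : ℝ := Real.pi / M s t
  have hmθ : M s t * θ = Real.pi := mul_div_cancel₀ _ (by positivity)
  have hm' : (2 : ℝ) ≤ M s t := by exact_mod_cast hm
  have hθ : 0 < θ := by positivity
  have hsin : 0 < Real.sin θ := Real.sin_pos_of_pos_of_lt_pi hθ (by nlinarith)
  have heval : (Chebyshev.S ℝ (n - 1 : ℤ)).eval (2 * Real.cos θ) =
      Real.sin (n * θ) / Real.sin θ := by
    rw [eq_div_iff hsin.ne', Chebyshev.S_two_mul_real_cos]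
    push_cast
    rw [sub_add_cancel]
  rw [heval]
  obtain rfl | hn0 := n.eq_zero_or_pos
  · exact Or.inl (by simp)
  obtain rfl | hlt := hn.eq_or_lt
  · exact Or.inl (by rw [hmθ, Real.sin_pi, zero_div])
  have hn1 : (1 : ℝ) ≤ n := by exact_mod_cast hn0
  have hn2 : (n : ℝ) + 1 ≤ M s t := by exact_mod_cast hlt
  exact Or.inr ((one_le_div hsin).mpr
    (sin_le_sin_of_le_of_le_pi_sub hθ.le (by nlinarith) (by nlinarith)))

theorem geomRep_wordProd_alternatingWord (cs : CoxeterSystem M W) (s t : B) (n : ℕ) :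
    geomRep cs (cs.wordProd (alternatingWord s t n)) (simpleRoot s) =
      (Chebyshev.S ℝ n).eval (-2 * gram M s t) • simpleRoot (if Even n then s else t) +
        (Chebyshev.S ℝ (n - 1)).eval (-2 * gram M s t) • simpleRoot (if Even n then t else s) := by
  induction n with
  | zero => simp [alternatingWord]
  | succ n ih =>
    rw [alternatingWord_succ', cs.wordProd_cons, geomRep_mul_apply, ih]
    push_cast
    rw [add_sub_cancel_right, Chebyshev.S_add_one, eval_sub, eval_mul, eval_X]
    by_cases hn : Even n <;>
    · simp only [hn, Nat.even_add_one, not_true_eq_false, not_false_eq_true, if_true, if_false,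
        geomRep_simple_apply, map_add, map_smul, form_simpleRoot_self, form_simpleRoot_simpleRoot,
        gram_comm t s]
      module

theorem exists_gapped_geomRep_alternatingWord (cs : CoxeterSystem M W) {s t : B} (hst : s ≠ t)
    {n : ℕ} (hn : M s t = 0 ∨ n < M s t) :
    ∃ a b : ℝ, Gapped a ∧ Gapped b ∧
      geomRep cs (cs.wordProd (alternatingWord s t n)) (simpleRoot s) =
        a • simpleRoot s + b • simpleRoot t := by
  have h₀ := gapped_chebyshevS_eval hst (hn.imp_right le_of_lt)
  have h₁ := gapped_chebyshevS_eval (n := n + 1) hst hn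
  push_cast at h₁
  rw [add_sub_cancel_right] at h₁
  have h := geomRep_wordProd_alternatingWord cs s t n
  by_cases hn : Even n
  · simp only [hn, if_true] at h
    exact ⟨_, _, h₁, h₀, h⟩
  · simp only [hn, if_false] at h
    exact ⟨_, _, h₀, h₁, h.trans (add_comm _ _)⟩

end Dihedral

section AlternatingSuffix

open CoxeterSystem

/-- `w = v · (⋯ i t)` is a reduced factorisation whose right factor is alternating of length `n` in
`i` and `t`. -/
def AlternatingFactorization (cs : CoxeterSystem M W) (i t : B) (n : ℕ) (v w : W) : Prop :=
  w = v * cs.wordProd (alternatingWord i t n) ∧ cs.length w = cs.length v + n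

namespace AlternatingFactorization

variable {i t : B} {n : ℕ} {v w : W}

theorem length_mul_alternatingWord_le (cs : CoxeterSystem M W) (v : W) (i t : B) (n : ℕ) :
    cs.length (v * cs.wordProd (alternatingWord i t n)) ≤ cs.length v + n := by
  have h₁ := cs.length_mul_le v (cs.wordProd (alternatingWord i t n))
  have h₂ := cs.length_wordProd_le (alternatingWord i t n)
  rw [length_alternatingWord] at h₂
  omega

theorem succ (h : AlternatingFactorization cs i t n v w)
    (hv : cs.IsRightDescent v (if Even n then t else i)) :
    AlternatingFactorization cs i t (n + 1) (v * cs.simple (if Even n then t else i)) w := by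
  refine ⟨?_, ?_⟩
  · rw [alternatingWord_succ', cs.wordProd_cons, mul_assoc, cs.simple_mul_simple_cancel_left]
    exact h.1
  · rw [cs.isRightDescent_iff] at hv
    have := h.2
    omega

theorem pred (h : AlternatingFactorization cs i t (n + 1) v w) :
    ¬ cs.IsRightDescent v (if Even n then t else i) ∧
      AlternatingFactorization cs i t n (v * cs.simple (if Even n then t else i)) w := by
  obtain ⟨hw, hlen⟩ := h
  rw [alternatingWord_succ', cs.wordProd_cons, ← mul_assoc] at hw
  have hle := length_mul_alternatingWord_le cs (v * cs.simple (if Even n then t else i)) i t n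
  rw [← hw] at hle
  have hmul := cs.length_mul_simple v (if Even n then t else i)
  exact ⟨by rw [cs.not_isRightDescent_iff]; omega, hw, by omega⟩

theorem exists_of_le {m : ℕ} (h : AlternatingFactorization cs i t n v w) (hm : m ≤ n) :
    ∃ u, AlternatingFactorization cs i t m u w :=
  Nat.decreasingInduction' (fun _ _ _ ⟨_, hu⟩ ↦ ⟨_, hu.pred.2⟩) hm ⟨v, h⟩

theorem lt_order (h : AlternatingFactorization cs i t n v w) (hw : ¬ cs.IsRightDescent w i) :
    M i t = 0 ∨ n < M i t := by
  by_contra! hcon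
  obtain ⟨hM, hn⟩ := hcon
  obtain ⟨u, rfl, hlen⟩ := h.exists_of_le hn
  refine hw ?_
  have hsym : M t i = M i t := M.symmetric t i
  have hshort : u * cs.wordProd (alternatingWord i t (M i t)) * cs.simple i =
      u * cs.wordProd (alternatingWord i t (M i t - 1)) := by
    rw [mul_assoc, ← cs.wordProd_concat, ← alternatingWord_succ,
      cs.prod_alternatingWord_eq_prod_alternatingWord_sub t i _ (by omega)]
    congr 3
    omega
  have := length_mul_alternatingWord_le cs u i t (M i t - 1)
  rw [IsRightDescent, hshort]
  omega

theorem exists_maximal (i : B) (ht : cs.IsRightDescent w t) :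
    ∃ n v, AlternatingFactorization cs i t n v w ∧ cs.length v < cs.length w ∧
      ¬ cs.IsRightDescent v i ∧ ¬ cs.IsRightDescent v t := by
  have hzero : AlternatingFactorization cs i t 0 w w := by
    simp [AlternatingFactorization, alternatingWord]
  obtain ⟨n, ⟨v, h⟩, hmax⟩ := Set.exists_max_image
    {n | ∃ v, AlternatingFactorization cs i t n v w} id
    ((Set.finite_Iic (cs.length w)).subset fun n ⟨v, _, h⟩ ↦ Set.mem_Iic.mpr (by omega))
    ⟨0, w, hzero⟩
  have hn : 1 ≤ n := hmax 1 ⟨_, hzero.succ (by simpa using ht)⟩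
  have hnext : ¬ cs.IsRightDescent v (if Even n then t else i) := fun hv ↦ by
    have : n + 1 ≤ n := hmax _ ⟨_, h.succ hv⟩
    omega
  obtain ⟨k, rfl⟩ : ∃ k, n = k + 1 := ⟨n - 1, by omega⟩
  have hprev := h.pred.1
  refine ⟨_, v, h, by have := h.2; omega, ?_⟩
  by_cases hk : Even k
  · simp only [hk, Nat.even_add_one, not_true_eq_false, if_true, if_false] at hnext hprev
    exact ⟨hnext, hprev⟩
  · simp only [hk, Nat.even_add_one, not_false_eq_true, if_true, if_false] at hnext hprev
    exact ⟨hprev, hnext⟩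

end AlternatingFactorization

theorem positive_geomRep_simpleRoot {w : W} {i : B} (hw : ¬ cs.IsRightDescent w i) :
    Positive (geomRep cs w (simpleRoot i)) := by
  induction hN : cs.length w using Nat.strong_induction_on generalizing w i with
  | _ N ih =>
  obtain rfl | hw1 := eq_or_ne w 1
  · simpa using positive_simpleRoot i
  obtain ⟨t, ht⟩ := cs.exists_rightDescent_of_ne_one hw1
  have hit : i ≠ t := by rintro rfl; exact hw ht
  obtain ⟨n, v, hfact, hlt, hvi, hvt⟩ := AlternatingFactorization.exists_maximal i ht
  obtain ⟨a, b, ha, hb, hab⟩ := exists_gapped_geomRep_alternatingWord cs hit (hfact.lt_order hw)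
  rw [hfact.1, geomRep_mul_apply, hab, map_add, map_smul, map_smul]
  exact (ih _ (hN ▸ hlt) hvi rfl).smul_add_smul (ih _ (hN ▸ hlt) hvt rfl) ha hb

end AlternatingSuffix

section Roots

theorem geomRep_mul_simple_simpleRoot (cs : CoxeterSystem M W) (w : W) (i : B) :
    geomRep cs (w * cs.simple i) (simpleRoot i) = -geomRep cs w (simpleRoot i) := by
  rw [geomRep_mul_apply, geomRep_simple_simpleRoot, map_neg]

/-- The roots: the orbit of the simple roots under the geometric representation. -/
def IsRoot (cs : CoxeterSystem M W) (v : B →₀ ℝ) : Prop :=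
  ∃ w i, v = geomRep cs w (simpleRoot i)

theorem isRoot_simpleRoot (cs : CoxeterSystem M W) (i : B) : IsRoot cs (simpleRoot i) :=
  ⟨1, i, by rw [map_one]; rfl⟩

namespace IsRoot

variable {v : B →₀ ℝ} {i : B}

theorem map (h : IsRoot cs v) (w : W) : IsRoot cs (geomRep cs w v) := by
  obtain ⟨x, i, rfl⟩ := h
  exact ⟨w * x, i, by rw [geomRep_mul_apply]⟩

theorem positive_or_positive_neg (h : IsRoot cs v) : Positive v ∨ Positive (-v) := by
  obtain ⟨w, i, rfl⟩ := h
  by_cases hw : cs.IsRightDescent w i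
  · rw [← geomRep_mul_simple_simpleRoot]
    exact .inr (positive_geomRep_simpleRoot (cs.isRightDescent_iff_not_isRightDescent_mul.mp hw))
  · exact .inl (positive_geomRep_simpleRoot hw)

theorem form_self (h : IsRoot cs v) : form M v v = 1 := by
  obtain ⟨w, i, rfl⟩ := h
  rw [form_geomRep_geomRep, form_simpleRoot_self]

theorem ne_zero (h : IsRoot cs v) : v ≠ 0 := by
  rintro rfl
  simpa using h.form_self

theorem not_positive_neg (h : IsRoot cs v) (hv : Positive v) : ¬ Positive (-v) :=
  hv.not_positive_neg h.ne_zero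

theorem positive_of_coeff_pos (h : IsRoot cs v) (hi : 0 < v i) : Positive v :=
  h.positive_or_positive_neg.resolve_right fun hneg ↦ by
    have := hneg.nonneg i
    rw [Finsupp.neg_apply] at this
    linarith

theorem exists_one_le (h : IsRoot cs v) (hv : Positive v) : ∃ i, 1 ≤ v i := by
  obtain ⟨i, hi⟩ := Finsupp.ne_iff.mp h.ne_zero
  exact ⟨i, (hv i).one_le hi⟩

theorem eq_simpleRoot (h : IsRoot cs v) (hv : Positive v) (hi : ∀ j ≠ i, v j = 0) :
    v = simpleRoot i := by
  have hsmul : v = v i • simpleRoot i := by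
    ext j
    obtain rfl | hj := eq_or_ne j i
    · simp [simpleRoot_apply_self]
    · simp [hi j hj, simpleRoot_apply_of_ne hj]
  have hone : v i * v i = 1 := by
    have := h.form_self
    rw [hsmul] at this
    simpa [form_simpleRoot_self, simpleRoot_apply_self] using this
  rw [hsmul, (mul_self_eq_one_iff.mp hone).resolve_right (by linarith [hv.nonneg i]), one_smul]

theorem exists_ne_one_le (h : IsRoot cs v) (hv : Positive v) (hi : v ≠ simpleRoot i) :
    ∃ j ≠ i, 1 ≤ v j := by
  contrapose! hi
  exact h.eq_simpleRoot hv fun j hj ↦ (hv j).resolve_right (hi j hj).not_ge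

theorem positive_geomRep_simple (h : IsRoot cs v) (hv : Positive v) (hi : v ≠ simpleRoot i) :
    Positive (geomRep cs (cs.simple i) v) := by
  obtain ⟨j, hj, hvj⟩ := h.exists_ne_one_le hv hi
  refine (h.map _).positive_of_coeff_pos (i := j) ?_
  rw [geomRep_simple_apply_of_ne cs v hj]
  linarith

end IsRoot

theorem finite_setOf_inversions (cs : CoxeterSystem M W) (w : W) :
    {β | IsRoot cs β ∧ Positive β ∧ Positive (-geomRep cs w β)}.Finite := by
  induction w using cs.simple_induction_left with
  | one =>
    refine Set.finite_empty.subset fun β ⟨hβ, hpos, hneg⟩ ↦ ?_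
    rw [map_one] at hneg
    exact hβ.not_positive_neg hpos hneg
  | mul_simple_left w i ih =>
    refine (ih.insert (geomRep cs w⁻¹ (simpleRoot i))).subset fun β ⟨hβ, hpos, hneg⟩ ↦ ?_
    refine or_iff_not_imp_right.mpr fun hinv ↦ ?_
    have hwβ : Positive (geomRep cs w β) :=
      (hβ.map w).positive_or_positive_neg.resolve_right fun h ↦ hinv ⟨hβ, hpos, h⟩
    by_contra hne
    rw [geomRep_mul_apply] at hneg
    refine ((hβ.map w).map _).not_positive_neg ((hβ.map w).positive_geomRep_simple hwβ ?_) hneg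
    rintro h
    exact hne (by rw [← h, geomRep_inv_apply_apply])

end Roots

section Reflections

theorem geomRep_injective (cs : CoxeterSystem M W) : Function.Injective (geomRep cs) := by
  refine (injective_iff_map_eq_one _).mpr fun w hw ↦ ?_
  by_contra hne
  obtain ⟨i, hi⟩ := cs.exists_rightDescent_of_ne_one hne
  have h := positive_geomRep_simpleRoot (cs.isRightDescent_iff_not_isRightDescent_mul.mp hi)
  rw [geomRep_mul_simple_simpleRoot, hw] at h
  exact (isRoot_simpleRoot cs i).not_positive_neg (positive_simpleRoot i) h

/-- `r` is the reflection of `W` that negates the root `β`. -/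
def IsReflectionAlong (cs : CoxeterSystem M W) (r : W) (β : B →₀ ℝ) : Prop :=
  ∃ w i, r = w * cs.simple i * w⁻¹ ∧ β = geomRep cs w (simpleRoot i)

theorem isReflectionAlong_simple (cs : CoxeterSystem M W) (i : B) :
    IsReflectionAlong cs (cs.simple i) (simpleRoot i) :=
  ⟨1, i, by simp, by rw [map_one]; rfl⟩

theorem IsRoot.exists_isReflectionAlong {β : B →₀ ℝ} (h : IsRoot cs β) :
    ∃ r, IsReflectionAlong cs r β := by
  obtain ⟨w, i, rfl⟩ := h
  exact ⟨_, w, i, rfl, rfl⟩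

namespace IsReflectionAlong

variable {r r' : W} {β γ : B →₀ ℝ}

theorem isRoot (h : IsReflectionAlong cs r β) : IsRoot cs β := by
  obtain ⟨w, i, -, rfl⟩ := h
  exact ⟨w, i, rfl⟩

theorem isReflection (h : IsReflectionAlong cs r β) : cs.IsReflection r := by
  obtain ⟨w, i, rfl, -⟩ := h
  exact ⟨w, i, rfl⟩

theorem geomRep_apply (h : IsReflectionAlong cs r β) (v : B →₀ ℝ) :
    geomRep cs r v = v - (2 * form M β v) • β := by
  obtain ⟨w, i, rfl, rfl⟩ := h
  rw [geomRep_mul_apply, geomRep_mul_apply, geomRep_simple_apply, map_sub, map_smul,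
    geomRep_apply_inv_apply, form_geomRep_left]

theorem geomRep_apply_self (h : IsReflectionAlong cs r β) : geomRep cs r β = -β := by
  rw [h.geomRep_apply, h.isRoot.form_self]
  module

theorem unique (h : IsReflectionAlong cs r β) (h' : IsReflectionAlong cs r' β) : r = r' :=
  geomRep_injective cs <| LinearEquiv.ext fun v ↦ by rw [h.geomRep_apply, h'.geomRep_apply]

theorem conj (h : IsReflectionAlong cs r β) (w : W) :
    IsReflectionAlong cs (w * r * w⁻¹) (geomRep cs w β) := by
  obtain ⟨x, i, rfl, rfl⟩ := h
  exact ⟨w * x, i, by group, by rw [geomRep_mul_apply]⟩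

theorem neg (h : IsReflectionAlong cs r β) : IsReflectionAlong cs r (-β) := by
  obtain ⟨w, i, rfl, rfl⟩ := h
  exact ⟨w * cs.simple i, i, by simp [mul_assoc], by rw [geomRep_mul_simple_simpleRoot]⟩

theorem length_mul_lt (h : IsReflectionAlong cs r β) (hβ : Positive β) {w : W}
    (hw : Positive (-geomRep cs w β)) : cs.length (w * r) < cs.length w := by
  obtain ⟨ω, hω, rfl⟩ := cs.exists_isReduced w
  rw [hω]
  clear hω
  induction ω with
  | nil =>
    rw [cs.wordProd_nil, map_one] at hw
    exact absurd hw (h.isRoot.not_positive_neg hβ)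
  | cons i ω ih =>
    rw [List.length_cons, Nat.lt_succ_iff, cs.wordProd_cons]
    by_cases hneg : Positive (-geomRep cs (cs.wordProd ω) β)
    · have := ih hneg
      have := cs.length_simple_mul (cs.wordProd ω * r) i
      rw [← mul_assoc] at this
      omega
    have hroot := h.isRoot.map (cs.wordProd ω)
    have heq : geomRep cs (cs.wordProd ω) β = simpleRoot i := by
      by_contra hne
      rw [cs.wordProd_cons, geomRep_mul_apply] at hw
      exact (hroot.map _).not_positive_neg (hroot.positive_geomRep_simple
        (hroot.positive_or_positive_neg.resolve_right hneg) hne) hw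
    have hconj := h.conj (cs.wordProd ω)
    rw [heq] at hconj
    rw [mul_assoc, mul_inv_eq_iff_eq_mul.mp (hconj.unique (isReflectionAlong_simple cs i)),
      cs.simple_mul_simple_cancel_left]
    exact cs.length_wordProd_le ω

theorem length_lt_mul (h : IsReflectionAlong cs r β) (hβ : Positive β) {w : W}
    (hw : Positive (geomRep cs w β)) : cs.length w < cs.length (w * r) := by
  have := h.length_mul_lt hβ (w := w * r)
    (by rwa [geomRep_mul_apply, h.geomRep_apply_self, map_neg, neg_neg])
  rwa [mul_assoc, h.isReflection.mul_self, mul_one] at this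

theorem positive_neg_of_length_mul_lt (h : IsReflectionAlong cs r β) (hβ : Positive β) {w : W}
    (hw : cs.length (w * r) < cs.length w) : Positive (-geomRep cs w β) :=
  (h.isRoot.map w).positive_or_positive_neg.resolve_left fun hpos ↦
    hw.not_gt (h.length_lt_mul hβ hpos)

theorem positive_of_length_lt_mul (h : IsReflectionAlong cs r β) (hβ : Positive β) {w : W}
    (hw : cs.length w < cs.length (w * r)) : Positive (geomRep cs w β) :=
  (h.isRoot.map w).positive_or_positive_neg.resolve_right fun hneg ↦
    hw.not_gt (h.length_mul_lt hβ hneg)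

theorem length_conj_simple_of_form_neg (h : IsReflectionAlong cs r β) (hβ : Positive β) {j : B}
    (hneg : form M β (simpleRoot j) < 0) :
    cs.length (cs.simple j * r * cs.simple j) = cs.length r + 2 := by
  have hne : β ≠ simpleRoot j := by
    rintro rfl
    rw [form_simpleRoot_self] at hneg
    linarith
  obtain ⟨i, hij, hi⟩ := h.isRoot.exists_ne_one_le hβ hne
  have hj := isReflectionAlong_simple cs j
  have hroot := hj.isRoot.map r
  have hpos : Positive (geomRep cs r (simpleRoot j)) := hroot.positive_of_coeff_pos (i := j) <| by
    rw [h.geomRep_apply]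
    simp only [Finsupp.sub_apply, Finsupp.smul_apply, smul_eq_mul, simpleRoot_apply_self]
    nlinarith [hβ.nonneg j]
  have hpos' : Positive (geomRep cs (cs.simple j * r) (simpleRoot j)) := by
    rw [geomRep_mul_apply]
    refine (hroot.map _).positive_of_coeff_pos (i := i) ?_
    rw [geomRep_simple_apply_of_ne cs _ hij, h.geomRep_apply]
    simp only [Finsupp.sub_apply, Finsupp.smul_apply, smul_eq_mul, simpleRoot_apply_of_ne hij]
    nlinarith
  have hlt := hj.length_lt_mul (positive_simpleRoot j) hpos
  have hlt' := hj.length_lt_mul (positive_simpleRoot j) hpos'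
  have hlen := cs.length_mul_simple r j
  have hlen' := cs.length_simple_mul (r * cs.simple j) j
  have hinv : cs.length (cs.simple j * r) = cs.length (r * cs.simple j) := by
    rw [← cs.length_inv, mul_inv_rev, h.isReflection.inv, cs.inv_simple]
  rw [← mul_assoc] at hlen'
  omega

theorem form_neg_of_length_lt_conj_simple (h : IsReflectionAlong cs r β) (hβ : Positive β) {j : B}
    (hlt : cs.length r < cs.length (cs.simple j * r * cs.simple j)) :
    form M β (simpleRoot j) < 0 := by
  by_contra! hnonneg
  have hconj := h.conj (cs.simple j)
  rw [cs.inv_simple] at hconj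
  have happly : geomRep cs (cs.simple j) β =
      β - (2 * form M β (simpleRoot j)) • simpleRoot j := by
    rw [geomRep_simple_apply, form_comm]
  obtain hzero | hpos := hnonneg.eq_or_lt
  · rw [happly, ← hzero, mul_zero, zero_smul, sub_zero] at hconj
    exact hlt.ne (by rw [hconj.unique h])
  obtain rfl | hne := eq_or_ne β (simpleRoot j)
  · rw [h.unique (isReflectionAlong_simple cs j)] at hlt
    simp at hlt
  have hlen := hconj.length_conj_simple_of_form_neg (h.isRoot.positive_geomRep_simple hβ hne)
    (j := j) <| by
      rw [happly, map_sub, map_smul, LinearMap.sub_apply, LinearMap.smul_apply,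
        form_simpleRoot_self, smul_eq_mul]
      linarith
  rw [mul_assoc (cs.simple j), cs.simple_mul_simple_cancel_right,
    cs.simple_mul_simple_cancel_left] at hlen
  omega

end IsReflectionAlong

theorem exists_isReflectionAlong_positive {r : W} (hr : cs.IsReflection r) :
    ∃ β, IsReflectionAlong cs r β ∧ Positive β := by
  obtain ⟨w, i, rfl⟩ := hr
  have h : IsReflectionAlong cs (w * cs.simple i * w⁻¹) _ := ⟨w, i, rfl, rfl⟩
  obtain hpos | hneg := h.isRoot.positive_or_positive_neg
  · exact ⟨_, h, hpos⟩
  · exact ⟨_, h.neg, hneg⟩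

end Reflections

end CoxeterGeometry

section OrderOfProducts

theorem finite_closure_pair_of_isOfFinOrder_mul {G : Type*} [Group G] {r r' : G}
    (hr : r * r = 1) (hr' : r' * r' = 1) (h : IsOfFinOrder (r * r')) :
    (Subgroup.closure {r, r'} : Set G).Finite := by
  have hrinv : r⁻¹ = r := inv_eq_of_mul_eq_one_left hr
  have hnormal : Subgroup.zpowers r ≤ Subgroup.normalizer (Subgroup.zpowers (r * r') : Set G) := by
    rw [Subgroup.zpowers_le, Subgroup.mem_normalizer_iff_map_conj_eq, MonoidHom.map_zpowers]
    have hconj : MulAut.conj r (r * r') = (r * r')⁻¹ := by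
      rw [MulAut.conj_apply, mul_inv_rev, hrinv, inv_eq_of_mul_eq_one_left hr', ← mul_assoc, hr,
        one_mul]
    exact (congrArg Subgroup.zpowers hconj).trans Subgroup.zpowers_inv
  have hle : Subgroup.closure {r, r'} ≤ Subgroup.zpowers r ⊔ Subgroup.zpowers (r * r') := by
    have hmem := Subgroup.mem_sup_left (T := Subgroup.zpowers (r * r')) (Subgroup.mem_zpowers r)
    have hmem' := Subgroup.mem_sup_right (S := Subgroup.zpowers r) (Subgroup.mem_zpowers (r * r'))
    rw [Subgroup.closure_le]
    rintro x (rfl | rfl)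
    · exact hmem
    · simpa [← mul_assoc, hr] using Subgroup.mul_mem _ hmem hmem'
  refine Set.Finite.subset ?_ hle
  rw [Subgroup.coe_mul_of_left_le_normalizer_right _ _ hnormal]
  have hfin : IsOfFinOrder r := isOfFinOrder_iff_pow_eq_one.mpr ⟨2, two_pos, by rw [pow_two, hr]⟩
  exact Set.Finite.mul hfin.finite_zpowers h.finite_zpowers

theorem isOfFinOrder_mul_of_finite_closure_pair {G : Type*} [Group G] {r r' : G}
    (h : (Subgroup.closure {r, r'} : Set G).Finite) : IsOfFinOrder (r * r') := by
  have : Finite (Subgroup.closure {r, r'}) := h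
  have hmem : r * r' ∈ Subgroup.closure {r, r'} :=
    Subgroup.mul_mem _ (Subgroup.subset_closure (by simp)) (Subgroup.subset_closure (by simp))
  exact Submonoid.isOfFinOrder_coe.mpr (isOfFinOrder_of_finite (⟨_, hmem⟩ : Subgroup.closure _))

theorem adjacent_of_order_ne_zero (cs : CoxeterSystem M W) {i j : B} (h : M i j ≠ 0) :
    Adjacent cs i j :=
  finite_closure_pair_of_isOfFinOrder_mul (cs.simple_mul_simple_self i)
    (cs.simple_mul_simple_self j) <|
      isOfFinOrder_iff_pow_eq_one.mpr ⟨M i j, Nat.pos_of_ne_zero h, cs.simple_mul_simple_pow i j⟩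

theorem adjacent_self (cs : CoxeterSystem M W) (i : B) : Adjacent cs i i :=
  adjacent_of_order_ne_zero cs (by simp)

theorem Adjacent.symm {i j : B} (h : Adjacent cs i j) : Adjacent cs j i := by
  rwa [Adjacent, Set.pair_comm]

namespace CoxeterGeometry

theorem gram_eq_neg_one_of_not_adjacent {i j : B} (h : ¬ Adjacent cs i j) : gram M i j = -1 :=
  gram_of_eq_zero (not_not.mp fun h0 ↦ h (adjacent_of_order_ne_zero cs h0))

theorem gram_neg_iff_not_commute (cs : CoxeterSystem M W) {k l : B} :
    gram M k l < 0 ↔ ¬ Commute (cs.simple k) (cs.simple l) := by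
  obtain rfl | hkl := eq_or_ne k l
  · simp [gram_self]
  refine ⟨fun hneg hcomm ↦ ?_, fun h ↦ gram_neg_of_ne_two hkl fun h2 ↦ h ?_⟩
  · have h := congr(geomRep cs $(hcomm.eq) (simpleRoot l) k)
    rw [geomRep_mul_simple_simpleRoot, geomRep_mul_apply] at h
    simp [geomRep_simple_apply, form_simpleRoot_simpleRoot, simpleRoot_apply_self,
      simpleRoot_apply_of_ne hkl] at h
    linarith
  · have hpow := cs.simple_mul_simple_pow k l
    rw [h2, pow_two] at hpow
    have := eq_inv_of_mul_eq_one_left hpow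
    rwa [mul_inv_rev, cs.inv_simple, cs.inv_simple] at this

theorem adjacent_of_commute {k l : B} (h : Commute (cs.simple k) (cs.simple l)) :
    Adjacent cs k l := by
  by_contra hkl
  exact (gram_neg_iff_not_commute cs).mp
    (gram_eq_neg_one_of_not_adjacent hkl ▸ neg_one_lt_zero) h

namespace IsReflectionAlong

variable {r r' : W} {β γ : B →₀ ℝ}

theorem exists_coeff_geomRep_mul_pow (h : IsReflectionAlong cs r β)
    (h' : IsReflectionAlong cs r' γ) (hform : form M β γ ≤ -1) (n : ℕ) :
    ∃ p q : ℝ, 0 ≤ q ∧ q < p ∧ (n ≠ 0 → 0 < q) ∧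
      geomRep cs ((r * r') ^ n) β = p • β + q • γ := by
  induction n with
  | zero => exact ⟨1, 0, le_rfl, zero_lt_one, by simp, by simp⟩
  | succ n ih =>
    obtain ⟨p, q, hq, hpq, -, heq⟩ := ih
    set b := form M β γ
    have hq' : p < -2 * b * p - q := by nlinarith
    have hp' : -2 * b * p - q < -2 * b * (-2 * b * p - q) - p := by nlinarith
    refine ⟨-2 * b * (-2 * b * p - q) - p, -2 * b * p - q, by linarith, hp',
      fun _ ↦ by linarith, ?_⟩
    rw [pow_succ', geomRep_mul_apply, heq, geomRep_mul_apply, h'.geomRep_apply, h.geomRep_apply]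
    simp only [map_add, map_sub, map_smul, smul_eq_mul, h.isRoot.form_self, h'.isRoot.form_self,
      form_comm γ β]
    module

theorem geomRep_mul_pow_ne (h : IsReflectionAlong cs r β) (h' : IsReflectionAlong cs r' γ)
    (hform : form M β γ ≤ -1) (hne : γ ≠ -β) {n : ℕ} (hn : n ≠ 0) :
    geomRep cs ((r * r') ^ n) β ≠ β := by
  obtain ⟨p, q, -, -, hq, heq⟩ := h.exists_coeff_geomRep_mul_pow h' hform n
  replace hq := hq hn
  rw [heq]
  intro hβ
  obtain ⟨c, rfl⟩ : ∃ c : ℝ, γ = c • β := ⟨q⁻¹ * (1 - p), by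
    rw [mul_smul, eq_inv_smul_iff₀ hq.ne', sub_smul, one_smul, eq_sub_iff_add_eq', hβ]⟩
  have hc : c * c = 1 := by simpa [h.isRoot.form_self] using h'.isRoot.form_self
  rw [map_smul, h.isRoot.form_self, smul_eq_mul] at hform
  exact hne (by rw [(mul_self_eq_one_iff.mp hc).resolve_left (by linarith), neg_one_smul])

theorem not_isOfFinOrder_mul (h : IsReflectionAlong cs r β) (h' : IsReflectionAlong cs r' γ)
    (hform : form M β γ ≤ -1) (hne : γ ≠ -β) : ¬ IsOfFinOrder (r * r') := by
  rw [isOfFinOrder_iff_pow_eq_one]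
  rintro ⟨n, hn, hpow⟩
  refine h.geomRep_mul_pow_ne h' hform hne hn.ne' ?_
  rw [hpow, map_one, LinearEquiv.coe_one, id]

theorem infinite_setOf_root_combination (h : IsReflectionAlong cs r β)
    (h' : IsReflectionAlong cs r' γ) (hform : form M β γ ≤ -1) (hne : γ ≠ -β) :
    {δ | IsRoot cs δ ∧ ∃ p q : ℝ, 0 < q ∧ q < p ∧ δ = p • β + q • γ}.Infinite := by
  refine Set.infinite_of_injective_forall_mem
    (f := fun n : ℕ ↦ geomRep cs ((r * r') ^ (n + 1)) β) ?_ fun n ↦ ?_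
  · refine Function.Injective.of_lt_imp_ne fun m n hmn heq ↦
      h.geomRep_mul_pow_ne h' hform hne (Nat.sub_ne_zero_of_lt hmn) ?_
    apply (geomRep cs ((r * r') ^ (m + 1))).injective
    rw [heq, ← geomRep_mul_apply, ← pow_add]
    congr 3
    omega
  · obtain ⟨p, q, -, hpq, hq, heq⟩ := h.exists_coeff_geomRep_mul_pow h' hform (n + 1)
    exact ⟨h.isRoot.map _, p, q, hq n.succ_ne_zero, hpq, heq⟩

end IsReflectionAlong

end CoxeterGeometry

end OrderOfProducts

section Irreducible

theorem irreducibleSubset_singleton (cs : CoxeterSystem M W) (i : B) :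
    IrreducibleSubset cs {i} := by
  rintro ⟨K, L, ⟨k, hk⟩, ⟨l, hl⟩, hd, hu, -⟩
  have hk' : k = i := hu.subset (.inl hk)
  have hl' : l = i := hu.subset (.inr hl)
  exact hd.ne_of_mem hk hl (hk'.trans hl'.symm)

theorem IrreducibleSubset.subset_or_subset {J K L : Set B} (h : IrreducibleSubset cs J)
    (hd : Disjoint K L) (hJ : J ⊆ K ∪ L)
    (hc : ∀ k ∈ K, ∀ l ∈ L, Commute (cs.simple k) (cs.simple l)) : J ⊆ K ∨ J ⊆ L := by
  contrapose! h
  obtain ⟨⟨l, hlJ, hlK⟩, ⟨k, hkJ, hkL⟩⟩ := h.imp Set.not_subset.mp Set.not_subset.mp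
  exact not_not.mpr ⟨J ∩ K, J ∩ L, ⟨k, hkJ, (hJ hkJ).resolve_right hkL⟩,
    ⟨l, hlJ, (hJ hlJ).resolve_left hlK⟩, hd.mono Set.inter_subset_right Set.inter_subset_right,
    by rw [← Set.inter_union_distrib_left, Set.inter_eq_left.mpr hJ],
    fun k hk l hl ↦ hc k hk.2 l hl.2⟩

theorem IrreducibleSubset.union_singleton {J : Set B} (h : IrreducibleSubset cs J) {q : B}
    (hq : q ∉ perpIn cs Set.univ J) : IrreducibleSubset cs (J ∪ {q}) := by
  have hnot_subset {K L : Set B} (hK : K.Nonempty) (hd : Disjoint K L) (hu : K ∪ L = J ∪ {q})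
      (hc : ∀ k ∈ K, ∀ l ∈ L, Commute (cs.simple k) (cs.simple l)) : ¬ J ⊆ L := by
    intro hJL
    obtain ⟨k, hk⟩ := hK
    have hkJ : k ∉ J := fun hkJ ↦ hd.ne_of_mem hk (hJL hkJ) rfl
    obtain rfl : k = q := (hu.subset (.inl hk)).resolve_left hkJ
    exact hq ⟨⟨trivial, hkJ⟩, fun j hj ↦ hc k hk j (hJL hj)⟩
  rintro ⟨K, L, hK, hL, hd, hu, hc⟩
  obtain hJK | hJL := h.subset_or_subset hd (Set.subset_union_left.trans hu.superset) hc
  · exact hnot_subset hL hd.symm (by rwa [Set.union_comm]) (fun l hl k hk ↦ (hc k hk l hl).symm)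
      hJK
  · exact hnot_subset hK hd hu hc hJL

theorem TwoSpherical.union_singleton {J : Set B} (h : TwoSpherical cs J) {q : B}
    (hq : ∀ j ∈ J, Adjacent cs q j) : TwoSpherical cs (J ∪ {q}) := by
  rintro i (hi | rfl) j (hj | rfl)
  · exact h i hi j hj
  · exact (hq i hi).symm
  · exact hq j hj
  · exact adjacent_self cs _

end Irreducible

section Bases

open CoxeterGeometry

namespace CoxeterGeometry

theorem form_simpleRoot_le_gram {v : B →₀ ℝ} (hv : Positive v) {j m : B} (hj : v j ≠ 0)
    (hm : v m = 0) : form M v (simpleRoot m) ≤ gram M j m := by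
  classical
  have hgram {i : B} (hi : v i ≠ 0) : gram M i m ≤ 0 := gram_nonpos (by rintro rfl; exact hi hm)
  rw [form_simpleRoot_right, Finsupp.sum,
    ← Finset.add_sum_erase _ _ (Finsupp.mem_support_iff.mpr hj)]
  have : ∑ i ∈ v.support.erase j, v i * gram M i m ≤ 0 := Finset.sum_nonpos fun i hi ↦
    mul_nonpos_of_nonneg_of_nonpos (hv.nonneg i)
      (hgram (Finsupp.mem_support_iff.mp (Finset.mem_of_mem_erase hi)))
  linarith [mul_le_mul_of_nonpos_right ((hv j).one_le hj) (hgram hj)]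

theorem exists_gram_neg_of_form_neg {v : B →₀ ℝ} (hv : Positive v) {q : B}
    (h : form M v (simpleRoot q) < 0) : ∃ j ∈ v.support, gram M j q < 0 := by
  contrapose! h
  rw [form_simpleRoot_right]
  exact Finset.sum_nonneg fun j hj ↦ mul_nonneg (hv.nonneg j) (h j hj)

theorem geomRep_apply_of_notMem {J : Set B} {u : W} (hu : u ∈ Subgroup.closure (cs.simple '' J))
    (v : B →₀ ℝ) {i : B} (hi : i ∉ J) : geomRep cs u v i = v i := by
  induction hu using Subgroup.closure_induction generalizing v with
  | mem x hx =>
    obtain ⟨j, hj, rfl⟩ := hx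
    exact geomRep_simple_apply_of_ne cs v (by rintro rfl; exact hi hj)
  | one => rw [map_one]; rfl
  | mul x y _ _ hx hy => rw [geomRep_mul_apply, hx, hy]
  | inv x _ hx => rw [← hx, geomRep_apply_inv_apply]

/-- The root `w⁻¹ α_s` of the reflection `w⁻¹ s w`. For a base `(s, w)` it is positive, and its
support in the basis of simple roots is the support of the base. -/
noncomputable def baseRoot (cs : CoxeterSystem M W) (s : B) (w : W) : B →₀ ℝ :=
  geomRep cs w⁻¹ (simpleRoot s)

variable (cs) in
theorem baseRoot_one (s : B) : baseRoot cs s 1 = simpleRoot s := by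
  rw [baseRoot, inv_one, map_one]
  rfl

variable (cs) in
theorem coe_support_baseRoot_one (s : B) : ((baseRoot cs s 1).support : Set B) = {s} := by
  rw [baseRoot_one, simpleRoot, Finsupp.support_single _ one_ne_zero, Finset.coe_singleton]

variable (cs) in
theorem isReflectionAlong_baseRoot (s : B) (w : W) :
    IsReflectionAlong cs (w⁻¹ * cs.simple s * w) (baseRoot cs s w) := by
  simpa only [inv_inv, baseRoot] using (isReflectionAlong_simple cs s).conj w⁻¹

variable (cs) in
theorem baseRoot_mul_simple (s : B) (w : W) (q : B) :
    baseRoot cs s (w * cs.simple q) =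
      baseRoot cs s w - (2 * form M (baseRoot cs s w) (simpleRoot q)) • simpleRoot q := by
  rw [baseRoot, mul_inv_rev, cs.inv_simple, geomRep_mul_apply, geomRep_simple_apply, form_comm,
    baseRoot]

variable (cs) in
theorem mul_simple_inv_mul_mul (w x : W) (q : B) :
    (w * cs.simple q)⁻¹ * x * (w * cs.simple q) = cs.simple q * (w⁻¹ * x * w) * cs.simple q := by
  simp only [mul_inv_rev, cs.inv_simple, mul_assoc]

variable (cs) in
theorem length_inv_mul_simple_mul_le (w : W) (s : B) :
    cs.length (w⁻¹ * cs.simple s * w) ≤ 2 * cs.length w + 1 := by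
  have h := cs.length_mul_le (w⁻¹ * cs.simple s) w
  have h' := cs.length_mul_le w⁻¹ (cs.simple s)
  rw [cs.length_inv, cs.length_simple] at h'
  omega

end CoxeterGeometry

theorem isBase_one (cs : CoxeterSystem M W) (s : B) : IsBase cs s 1 :=
  ⟨by simp, fun t _ ht ↦ by simp at ht⟩

namespace IsBase

variable {s q : B} {w : W}

theorem positive_baseRoot (h : IsBase cs s w) : Positive (baseRoot cs s w) := by
  refine (isReflectionAlong_simple cs s).positive_of_length_lt_mul (positive_simpleRoot s) ?_
  have := cs.length_mul_le (w⁻¹ * cs.simple s) w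
  have := h.1
  rw [cs.length_inv]
  omega

theorem not_isOfFinOrder (h : IsBase cs s w)
    (hform : form M (baseRoot cs s w) (simpleRoot q) ≤ -1) :
    ¬ IsOfFinOrder (cs.simple s * (w * cs.simple q * w⁻¹)) := by
  refine (isReflectionAlong_simple cs s).not_isOfFinOrder_mul
    ((isReflectionAlong_simple cs q).conj w) ?_ fun hneg ↦ ?_
  · rwa [baseRoot, form_geomRep_left, inv_inv] at hform
  · have hq : -baseRoot cs s w = simpleRoot q := by
      rw [baseRoot, ← map_neg, ← hneg, geomRep_inv_apply_apply]
    exact (isReflectionAlong_baseRoot cs s w).isRoot.not_positive_neg h.positive_baseRoot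
      (hq ▸ positive_simpleRoot q)

theorem of_mul_simple (h : IsBase cs s (w * cs.simple q))
    (hlen : cs.length (w * cs.simple q) = cs.length w + 1) : IsBase cs s w := by
  refine ⟨(length_inv_mul_simple_mul_le cs w s).antisymm ?_, fun t ht hlt ↦ h.2 t ht ?_⟩
  · have hconj := h.1
    rw [mul_simple_inv_mul_mul, hlen] at hconj
    have := cs.length_mul_le (cs.simple q * (w⁻¹ * cs.simple s * w)) (cs.simple q)
    have := cs.length_mul_le (cs.simple q) (w⁻¹ * cs.simple s * w)
    rw [cs.length_simple] at *
    omega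
  · have := cs.length_mul_le (t * w) (cs.simple q)
    rw [cs.length_simple] at this
    rw [← mul_assoc]
    omega

theorem form_neg_of_mul_simple (h : IsBase cs s (w * cs.simple q))
    (hlen : cs.length (w * cs.simple q) = cs.length w + 1) :
    form M (baseRoot cs s w) (simpleRoot q) < 0 := by
  have hw := h.of_mul_simple hlen
  refine (isReflectionAlong_baseRoot cs s w).form_neg_of_length_lt_conj_simple
    hw.positive_baseRoot ?_
  rw [← mul_simple_inv_mul_mul, h.1, hw.1]
  omega

theorem neg_one_lt_form_of_mul_simple (h : IsBase cs s (w * cs.simple q))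
    (hlen : cs.length (w * cs.simple q) = cs.length w + 1) :
    -1 < form M (baseRoot cs s w) (simpleRoot q) := by
  by_contra! hle
  refine (h.of_mul_simple hlen).not_isOfFinOrder hle
    (isOfFinOrder_mul_of_finite_closure_pair (h.2 _ ⟨w, q, rfl⟩ ?_))
  rw [← mul_assoc, inv_mul_cancel_right, cs.simple_mul_simple_cancel_right, hlen]
  exact Nat.lt_succ_self _

theorem length_mul_simple (h : IsBase cs s w)
    (hneg : form M (baseRoot cs s w) (simpleRoot q) < 0) :
    cs.length (w * cs.simple q) = cs.length w + 1 := by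
  have hconj := (isReflectionAlong_baseRoot cs s w).length_conj_simple_of_form_neg
    h.positive_baseRoot hneg
  have := length_inv_mul_simple_mul_le cs (w * cs.simple q) s
  have := cs.length_mul_simple w q
  rw [mul_simple_inv_mul_mul] at *
  have := h.1
  omega

theorem mul_simple (h : IsBase cs s w) (hneg : form M (baseRoot cs s w) (simpleRoot q) < 0)
    (hfin : IsOfFinOrder (cs.simple s * (w * cs.simple q * w⁻¹))) :
    IsBase cs s (w * cs.simple q) := by
  have hlen := h.length_mul_simple hneg
  refine ⟨?_, fun t ht hlt ↦ ?_⟩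
  · rw [mul_simple_inv_mul_mul, (isReflectionAlong_baseRoot cs s w).length_conj_simple_of_form_neg
      h.positive_baseRoot hneg, h.1, hlen]
    ring
  have length_inv_mul (u : W) : cs.length (u⁻¹ * t) = cs.length (t * u) := by
    rw [← cs.length_inv, mul_inv_rev, inv_inv, ht.inv]
  by_cases hcase : cs.length (t * w) < cs.length w
  · exact h.2 t ht hcase
  obtain ⟨δ, hδ, hpos⟩ := exists_isReflectionAlong_positive ht
  have hwδ : Positive (geomRep cs w⁻¹ δ) :=
    (hδ.isRoot.map _).positive_or_positive_neg.resolve_right fun hneg ↦ hcase <| by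
      simpa only [length_inv_mul, cs.length_inv] using hδ.length_mul_lt hpos hneg
  have hδq : geomRep cs w⁻¹ δ = simpleRoot q := by
    by_contra hne
    have hwqδ := hδ.positive_neg_of_length_mul_lt hpos (w := (w * cs.simple q)⁻¹)
      (by rwa [length_inv_mul, cs.length_inv])
    rw [mul_inv_rev, cs.inv_simple, geomRep_mul_apply] at hwqδ
    exact ((hδ.isRoot.map _).map _).not_positive_neg
      ((hδ.isRoot.map _).positive_geomRep_simple hwδ hne) hwqδ
  have hconj := (isReflectionAlong_simple cs q).conj w
  rw [← hδq, geomRep_apply_inv_apply] at hconj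
  rw [hδ.unique hconj]
  exact finite_closure_pair_of_isOfFinOrder_mul (cs.simple_mul_simple_self s)
    hconj.isReflection.mul_self hfin

theorem induction {motive : ∀ w, IsBase cs s w → Prop} (one : motive 1 (isBase_one cs s))
    (mul_simple : ∀ w q (hw : IsBase cs s w) (hwq : IsBase cs s (w * cs.simple q)),
      form M (baseRoot cs s w) (simpleRoot q) < 0 →
      -1 < form M (baseRoot cs s w) (simpleRoot q) → motive w hw → motive (w * cs.simple q) hwq)
    {w : W} (h : IsBase cs s w) : motive w h := by
  induction hn : cs.length w generalizing w with
  | zero =>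
    obtain rfl := cs.length_eq_zero_iff.mp hn
    exact one
  | succ n ih =>
    obtain ⟨q, hq⟩ := cs.exists_rightDescent_of_ne_one (w := w) (by rintro rfl; simp at hn)
    have hlen := (cs.isRightDescent_iff.mp hq).symm
    obtain ⟨v, rfl⟩ : ∃ v, w = v * cs.simple q := ⟨w * cs.simple q, by simp⟩
    rw [cs.simple_mul_simple_cancel_right] at hlen
    have hv := h.of_mul_simple hlen
    exact mul_simple v q hv h (h.form_neg_of_mul_simple hlen) (h.neg_one_lt_form_of_mul_simple hlen)
      (ih hv (by omega))

theorem coe_support_baseRoot_mul_simple (h : IsBase cs s w)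
    (hneg : form M (baseRoot cs s w) (simpleRoot q) < 0) :
    ((baseRoot cs s (w * cs.simple q)).support : Set B) = ↑(baseRoot cs s w).support ∪ {q} := by
  ext i
  simp only [Set.mem_union, Finset.mem_coe, Finsupp.mem_support_iff, Set.mem_singleton_iff,
    baseRoot_mul_simple, Finsupp.sub_apply, Finsupp.smul_apply, smul_eq_mul]
  obtain rfl | hi := eq_or_ne i q
  · rw [simpleRoot_apply_self]
    simp only [or_true, iff_true]
    linarith [h.positive_baseRoot.nonneg i]
  · simp [simpleRoot_apply_of_ne hi, hi]

theorem isSupport_support_baseRoot (h : IsBase cs s w) :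
    IsSupport cs s w (baseRoot cs s w).support := by
  have hmem : s ∈ (baseRoot cs s w).support ∧
      w ∈ Subgroup.closure (cs.simple '' ((baseRoot cs s w).support : Set B)) := by
    rw [← Finset.mem_coe]
    induction h using IsBase.induction with
    | one => exact ⟨by simp [baseRoot_one, simpleRoot_apply_self], Subgroup.one_mem _⟩
    | mul_simple w q hw _ hneg _ ih =>
      rw [hw.coe_support_baseRoot_mul_simple hneg]
      exact ⟨.inl ih.1, Subgroup.mul_mem _
        (Subgroup.closure_mono (Set.image_mono Set.subset_union_left) ih.2)
        (Subgroup.subset_closure ⟨q, .inr rfl, rfl⟩)⟩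
  refine ⟨hmem.1, hmem.2, fun J hs hw i hi ↦ ?_⟩
  by_contra hiJ
  rw [Finset.mem_coe, Finsupp.mem_support_iff, baseRoot,
    geomRep_apply_of_notMem (Subgroup.inv_mem _ hw) _ hiJ] at hi
  exact hi (simpleRoot_apply_of_ne (by rintro rfl; exact hiJ hs))

theorem support_eq {J : Set B} (h : IsBase cs s w) (hJ : IsSupport cs s w J) :
    J = (baseRoot cs s w).support :=
  have h' := h.isSupport_support_baseRoot
  (hJ.2.2 _ h'.1 h'.2.1).antisymm (h'.2.2 _ hJ.1 hJ.2.1)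

theorem twoSpherical_support (h : IsBase cs s w) : TwoSpherical cs (baseRoot cs s w).support := by
  induction h using IsBase.induction with
  | one =>
    rw [coe_support_baseRoot_one]
    rintro i rfl j rfl
    exact adjacent_self cs _
  | mul_simple w q hw _ hneg hlt ih =>
    rw [hw.coe_support_baseRoot_mul_simple hneg]
    refine ih.union_singleton fun j hj ↦ ?_
    by_cases hq : baseRoot cs s w q = 0
    · by_contra hqj
      have hle := form_simpleRoot_le_gram (M := M) hw.positive_baseRoot
        (Finsupp.mem_support_iff.mp hj) hq
      exact hlt.not_ge (hle.trans_eq (gram_eq_neg_one_of_not_adjacent fun h ↦ hqj h.symm))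
    · exact ih q (Finsupp.mem_support_iff.mpr hq) j hj

theorem irreducibleSubset_support (h : IsBase cs s w) :
    IrreducibleSubset cs (baseRoot cs s w).support := by
  induction h using IsBase.induction with
  | one =>
    rw [coe_support_baseRoot_one]
    exact irreducibleSubset_singleton cs s
  | mul_simple w q hw _ hneg _ ih =>
    rw [hw.coe_support_baseRoot_mul_simple hneg]
    obtain ⟨j, hj, hjq⟩ := exists_gram_neg_of_form_neg hw.positive_baseRoot hneg
    exact ih.union_singleton fun hperp ↦
      (gram_neg_iff_not_commute cs).mp hjq (hperp.2 j hj).symm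

end IsBase

end Bases

section Dominance

open CoxeterGeometry

namespace CoxeterGeometry

theorem IsRoot.neg {v : B →₀ ℝ} (h : IsRoot cs v) : IsRoot cs (-v) := by
  obtain ⟨w, i, rfl⟩ := h
  exact ⟨w * cs.simple i, i, by rw [geomRep_mul_simple_simpleRoot]⟩

variable (cs) in
theorem geomRep_baseRoot (s : B) (w : W) : geomRep cs w (baseRoot cs s w) = simpleRoot s :=
  geomRep_apply_inv_apply cs w _

end CoxeterGeometry

namespace IsBase

variable {s i : B} {w : W} {β : B →₀ ℝ}

theorem positive_geomRep_of_one_le_form (h : IsBase cs s w) (hβ : IsRoot cs β) (hpos : Positive β)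
    (hform : 1 ≤ form M (baseRoot cs s w) β) (hne : β ≠ baseRoot cs s w) :
    Positive (geomRep cs w β) := by
  refine (hβ.map w).positive_or_positive_neg.resolve_right fun hneg ↦ ?_
  obtain ⟨r, hr⟩ := hβ.exists_isReflectionAlong
  have hconj := hr.conj w
  refine (isReflectionAlong_simple cs s).not_isOfFinOrder_mul hconj.neg ?_ ?_
    (isOfFinOrder_mul_of_finite_closure_pair (h.2 _ hconj.isReflection ?_))
  · rw [baseRoot, form_geomRep_left, inv_inv] at hform
    rw [map_neg]
    linarith
  · rwa [← geomRep_baseRoot cs s w, ne_eq, neg_inj, (geomRep cs w).injective.eq_iff]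
  · rw [inv_mul_cancel_right]
    exact hr.length_mul_lt hpos hneg

/-
If `β ≠ w⁻¹ α_s`, then `w β` is positive and the reflections in `w⁻¹ α_s` and `-β` generate an
infinite dihedral group, infinitely many of whose roots are inversions of `w`.
-/
theorem eq_baseRoot_of_one_le_form (h : IsBase cs s w) (hβ : IsRoot cs β) (hpos : Positive β)
    (hform : 1 ≤ form M (baseRoot cs s w) β) (hi : 0 < baseRoot cs s w i)
    (hle : β i ≤ baseRoot cs s w i) : β = baseRoot cs s w := by
  by_contra hne
  have hwβ := h.positive_geomRep_of_one_le_form hβ hpos hform hne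
  have hwβ_ne : geomRep cs w β ≠ simpleRoot s := by
    rwa [← geomRep_baseRoot cs s w, ne_eq, (geomRep cs w).injective.eq_iff]
  obtain ⟨j, hjs, hj⟩ := (hβ.map w).exists_ne_one_le hwβ hwβ_ne
  obtain ⟨r, hr⟩ := hβ.exists_isReflectionAlong
  have hinf := (isReflectionAlong_baseRoot cs s w).infinite_setOf_root_combination hr.neg
    (by rw [map_neg]; linarith) (neg_injective.ne hne)
  refine hinf ((finite_setOf_inversions cs w).subset ?_)
  rintro δ ⟨hδ, p, q, hq, hpq, hcomb⟩
  refine ⟨hδ, hδ.positive_of_coeff_pos (i := i) ?_,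
    (hδ.map w).neg.positive_of_coeff_pos (i := j) ?_⟩
  · simp only [hcomb, Finsupp.add_apply, Finsupp.smul_apply, Finsupp.neg_apply, smul_eq_mul]
    nlinarith
  · rw [hcomb, map_add, map_smul, map_smul, geomRep_baseRoot, map_neg]
    simp only [Finsupp.neg_apply, Finsupp.add_apply, Finsupp.smul_apply, smul_eq_mul,
      simpleRoot_apply_of_ne hjs]
    nlinarith

end IsBase

end Dominance

namespace CoxeterGeometry

section AdmissibleFunctionals

open Module

theorem dual_apply (F : Dual ℝ (B →₀ ℝ)) (v : B →₀ ℝ) :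
    F v = v.sum fun i a ↦ a * F (simpleRoot i) := by
  conv_lhs => rw [← v.sum_single]
  rw [map_finsuppSum]
  refine Finsupp.sum_congr fun i _ ↦ ?_
  rw [← smul_eq_mul, ← map_smul, simpleRoot, Finsupp.smul_single_one]

/-- The height: the sum of the coefficients in the basis of simple roots. -/
noncomputable def height : Dual ℝ (B →₀ ℝ) :=
  Finsupp.linearCombination ℝ fun _ ↦ 1

theorem IsRoot.one_le_height {v : B →₀ ℝ} (h : IsRoot cs v) (hv : Positive v) : 1 ≤ height v := by
  obtain ⟨i, hi⟩ := h.exists_one_le hv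
  have hmem : i ∈ v.support := Finsupp.mem_support_iff.mpr (by linarith)
  rw [height, Finsupp.linearCombination_apply, Finsupp.sum]
  simp only [smul_eq_mul, mul_one]
  exact hi.trans (Finset.single_le_sum (fun j _ ↦ hv.nonneg j) hmem)

/-- A linear functional is admissible if it is positive on all but finitely many positive roots;
it then lies in the Tits cone. -/
def IsAdmissible (cs : CoxeterSystem M W) (F : Dual ℝ (B →₀ ℝ)) : Prop :=
  {δ | IsRoot cs δ ∧ Positive δ ∧ F δ ≤ 0}.Finite

theorem isAdmissible_height (cs : CoxeterSystem M W) : IsAdmissible cs height :=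
  Set.finite_empty.subset fun _ ⟨h, hpos, hle⟩ ↦ by
    linarith [h.one_le_height hpos]

namespace IsAdmissible

variable {F G : Dual ℝ (B →₀ ℝ)}

theorem comp (h : IsAdmissible cs F) (u : W) : IsAdmissible cs (F ∘ₗ geomRep cs u) := by
  refine ((finite_setOf_inversions cs u).union (h.preimage (f := geomRep cs u)
    (geomRep cs u).injective.injOn)).subset fun δ ⟨hδ, hpos, hle⟩ ↦ ?_
  obtain hu | hu := (hδ.map u).positive_or_positive_neg
  · exact .inr ⟨hδ.map u, hu, hle⟩
  · exact .inl ⟨hδ, hpos, hu⟩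

theorem add_smul (h : IsAdmissible cs F) (h' : IsAdmissible cs G) {c : ℝ} (hc : 0 ≤ c) :
    IsAdmissible cs (F + c • G) := by
  refine (h.union h').subset fun δ ⟨hδ, hpos, hle⟩ ↦ ?_
  rw [LinearMap.add_apply, LinearMap.smul_apply, smul_eq_mul] at hle
  obtain hF | hF := le_or_gt (F δ) 0
  · exact .inl ⟨hδ, hpos, hF⟩
  · exact .inr ⟨hδ, hpos, by nlinarith⟩

theorem ncard_negative_comp_lt (h : IsAdmissible cs F) {i : B} (hi : F (simpleRoot i) < 0) :
    {δ | IsRoot cs δ ∧ Positive δ ∧ (F ∘ₗ geomRep cs (cs.simple i)) δ < 0}.ncard <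
      {δ | IsRoot cs δ ∧ Positive δ ∧ F δ < 0}.ncard := by
  rw [← Set.ncard_image_of_injective _ (geomRep cs (cs.simple i)).injective]
  refine Set.ncard_lt_ncard ((Set.ssubset_iff_of_subset ?_).mpr
    ⟨simpleRoot i, ⟨isRoot_simpleRoot cs i, positive_simpleRoot i, hi⟩, ?_⟩)
    (h.subset fun δ ⟨hδ, hpos, hneg⟩ ↦ ⟨hδ, hpos, hneg.le⟩)
  · rintro _ ⟨δ, ⟨hδ, hpos, hneg⟩, rfl⟩
    refine ⟨hδ.map _, hδ.positive_geomRep_simple hpos ?_, hneg⟩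
    rintro rfl
    rw [LinearMap.comp_apply, LinearEquiv.coe_coe, geomRep_simple_simpleRoot, map_neg] at hneg
    linarith
  · rintro ⟨δ, ⟨-, hpos, -⟩, heq⟩
    have hδi : δ = -simpleRoot i := by
      rw [← geomRep_simple_simpleRoot cs, ← heq, ← geomRep_mul_apply, cs.simple_mul_simple_self,
        map_one, LinearEquiv.coe_one, id]
    exact (isRoot_simpleRoot cs i).not_positive_neg (positive_simpleRoot i) (hδi ▸ hpos)

theorem exists_nonneg_simpleRoot (h : IsAdmissible cs F) :
    ∃ u : W, ∀ i, 0 ≤ F (geomRep cs u (simpleRoot i)) := by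
  induction hn : {δ | IsRoot cs δ ∧ Positive δ ∧ F δ < 0}.ncard using Nat.strong_induction_on
    generalizing F with
  | _ n ih =>
    by_cases hall : ∀ i, 0 ≤ F (simpleRoot i)
    · exact ⟨1, by simpa using hall⟩
    push Not at hall
    obtain ⟨i, hi⟩ := hall
    obtain ⟨u, hu⟩ := ih _ (hn ▸ h.ncard_negative_comp_lt hi) (h.comp (cs.simple i)) rfl
    exact ⟨cs.simple i * u, fun j ↦ by rw [geomRep_mul_apply]; exact hu j⟩

end IsAdmissible

/-
If `g` acts on a plane with determinant `1` and trace `x`, then `g ^ 2` has trace `x ^ 2 - 2`;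
starting below `2`, iterated squaring makes the trace nonpositive.
-/
theorem exists_trace_nonpos (cs : CoxeterSystem M W) (g : W) {x : ℝ} (hx : x < 2) :
    ∃ (h : W) (z : ℝ), z ≤ 0 ∧ ∀ y, geomRep cs g y + geomRep cs g⁻¹ y = x • y →
      geomRep cs h y + geomRep cs h⁻¹ y = z • y := by
  obtain ⟨n, hn⟩ := pow_unbounded_of_one_lt (2 / (2 - x)) one_lt_two
  rw [div_lt_iff₀ (by linarith)] at hn
  induction n generalizing g x with
  | zero => exact ⟨g, x, by linarith, fun _ ↦ id⟩
  | succ n ih =>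
    obtain hx0 | hx0 := le_or_gt x 0
    · exact ⟨g, x, hx0, fun _ ↦ id⟩
    have hpow : (0 : ℝ) < 2 ^ n := by positivity
    obtain ⟨h, z, hz, hh⟩ := ih (g * g) (x := x ^ 2 - 2) (by nlinarith)
      (by rw [pow_succ] at hn; nlinarith [mul_pos hpow hx0, mul_pos hpow (sub_pos.mpr hx)])
    refine ⟨h, z, hz, fun y hy ↦ hh y ?_⟩
    have hg := congr(geomRep cs g $hy)
    have hg' := congr(geomRep cs g⁻¹ $hy)
    rw [map_add, map_smul, geomRep_apply_inv_apply, ← geomRep_mul_apply] at hg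
    rw [map_add, map_smul, geomRep_inv_apply_apply, ← geomRep_mul_apply] at hg'
    rw [mul_inv_rev, eq_sub_of_add_eq hg, eq_sub_of_add_eq' hg']
    calc x • geomRep cs g y - y + (x • geomRep cs g⁻¹ y - y)
        = x • (geomRep cs g y + geomRep cs g⁻¹ y) - (2 : ℝ) • y := by module
      _ = (x ^ 2 - 2) • y := by rw [hy]; module

theorem exists_isAdmissible_apply_eq_zero {β γ : B →₀ ℝ} (hβ : IsRoot cs β) (hγ : IsRoot cs γ)
    (hform : |form M β γ| < 1) : ∃ F, IsAdmissible cs F ∧ F β = 0 ∧ F γ = 0 := by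
  obtain ⟨r, hr⟩ := hβ.exists_isReflectionAlong
  obtain ⟨r', hr'⟩ := hγ.exists_isReflectionAlong
  set a := form M β γ
  have ha : a ^ 2 < 1 := by rwa [sq_lt_one_iff_abs_lt_one]
  obtain ⟨h, z, hz, hh⟩ := exists_trace_nonpos cs (r * r') (x := 4 * a ^ 2 - 2) (by linarith)
  let F : Dual ℝ (B →₀ ℝ) := height ∘ₗ (geomRep cs h).toLinearMap +
    (1 : ℝ) • (height ∘ₗ (geomRep cs h⁻¹).toLinearMap) + (-z) • height
  have hF : IsAdmissible cs F := (((isAdmissible_height cs).comp h).add_smul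
    ((isAdmissible_height cs).comp h⁻¹) zero_le_one).add_smul (isAdmissible_height cs)
      (neg_nonneg.mpr hz)
  have hzero {y : B →₀ ℝ} (hy : geomRep cs h y + geomRep cs h⁻¹ y = z • y) : F y = 0 := by
    have := congr(height $hy)
    rw [map_add, map_smul] at this
    simp only [F, LinearMap.add_apply, LinearMap.smul_apply, LinearMap.comp_apply,
      LinearEquiv.coe_coe, smul_eq_mul, one_mul] at this ⊢
    linarith
  refine ⟨F, hF, hzero (hh β ?_), hzero (hh γ ?_)⟩
  all_goals
    rw [mul_inv_rev, hr.isReflection.inv, hr'.isReflection.inv, geomRep_mul_apply,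
      geomRep_mul_apply]
    simp only [hr.geomRep_apply, hr'.geomRep_apply, map_sub, map_smul, hβ.form_self, hγ.form_self,
      form_comm γ β, smul_eq_mul]
    module

theorem IsRoot.apply_eq_zero_iff {δ : B →₀ ℝ} (hδ : IsRoot cs δ) {F : Dual ℝ (B →₀ ℝ)}
    (hF : ∀ i, 0 ≤ F (simpleRoot i)) : F δ = 0 ↔ ∀ i, F (simpleRoot i) ≠ 0 → δ i = 0 := by
  wlog hpos : Positive δ generalizing δ
  · simpa using this hδ.neg (hδ.positive_or_positive_neg.resolve_left hpos)
  rw [dual_apply, Finsupp.sum,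
    Finset.sum_eq_zero_iff_of_nonneg fun i _ ↦ mul_nonneg (hpos.nonneg i) (hF i)]
  simp only [Finsupp.mem_support_iff, mul_eq_zero]
  exact forall_congr' fun i ↦ by tauto

theorem finite_setOf_root_apply_eq_zero {F : Dual ℝ (B →₀ ℝ)} (h : IsAdmissible cs F) :
    {δ | IsRoot cs δ ∧ F δ = 0}.Finite := by
  refine (h.union (h.preimage neg_injective.injOn)).subset fun δ ⟨hδ, hzero⟩ ↦ ?_
  obtain hpos | hneg := hδ.positive_or_positive_neg
  · exact .inl ⟨hδ, hpos, hzero.le⟩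
  · exact .inr ⟨hδ.neg, hneg, by rw [map_neg, hzero, neg_zero]⟩

theorem finite_setOf_form_abs_lt_one [Finite B] (cs : CoxeterSystem M W) :
    {a | |a| < 1 ∧ ∃ β γ, IsRoot cs β ∧ IsRoot cs γ ∧ form M β γ = a}.Finite := by
  let rootsIn (K : Set B) : Set (B →₀ ℝ) := {δ | IsRoot cs δ ∧ ∀ i, i ∉ K → δ i = 0}
  have hfin : (⋃ K ∈ {K | (rootsIn K).Finite},
      (fun x : (B →₀ ℝ) × (B →₀ ℝ) ↦ form M x.1 x.2) '' (rootsIn K ×ˢ rootsIn K)).Finite :=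
    (Set.toFinite _).biUnion fun K hK ↦ (hK.prod hK).image _
  refine hfin.subset ?_
  rintro _ ⟨ha, β, γ, hβ, hγ, rfl⟩
  obtain ⟨F, hF, hFβ, hFγ⟩ := exists_isAdmissible_apply_eq_zero hβ hγ ha
  obtain ⟨u, hu⟩ := hF.exists_nonneg_simpleRoot
  have hrootsIn : rootsIn {i | F (geomRep cs u (simpleRoot i)) = 0} =
      {δ | IsRoot cs δ ∧ (F ∘ₗ geomRep cs u) δ = 0} :=
    Set.ext fun δ ↦ and_congr_right fun hδ ↦
      (hδ.apply_eq_zero_iff (F := F ∘ₗ geomRep cs u) hu).symm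
  refine Set.mem_biUnion (x := {i | F (geomRep cs u (simpleRoot i)) = 0}) ?_
    ⟨(geomRep cs u⁻¹ β, geomRep cs u⁻¹ γ), ?_, form_geomRep_geomRep cs _ _ _⟩
  · rw [Set.mem_ofPred_eq, hrootsIn]
    exact finite_setOf_root_apply_eq_zero (hF.comp u)
  · rw [hrootsIn]
    exact ⟨⟨hβ.map _, by simpa [geomRep_apply_inv_apply] using hFβ⟩,
      ⟨hγ.map _, by simpa [geomRep_apply_inv_apply] using hFγ⟩⟩

end AdmissibleFunctionals

end CoxeterGeometry

section BoundedBases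

open CoxeterGeometry

/-- The values of the form on the root of `(s, w)` and the simple roots, truncated below at `-1`.
There are only finitely many of these functions for all bases `(s, w)`. -/
noncomputable def formProfile (cs : CoxeterSystem M W) (s : B) (w : W) : B → ℝ :=
  fun t ↦ max (form M (baseRoot cs s w) (simpleRoot t)) (-1)

/-- The relation between the bases `(s, a)` and `(s, w)` that holds when `w` arises from `a` by
successively appending letters: coefficients grow, and the letters `t` with
`form (a⁻¹ α_s) α_t ≤ -1` are never appended. -/
def BaseExtends (cs : CoxeterSystem M W) (s : B) (a w : W) : Prop :=
  (∀ t, baseRoot cs s a t ≤ baseRoot cs s w t) ∧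
    ∀ t, form M (baseRoot cs s a) (simpleRoot t) ≤ -1 →
      baseRoot cs s w t = baseRoot cs s a t ∧ form M (baseRoot cs s w) (simpleRoot t) ≤ -1

theorem BaseExtends.refl (cs : CoxeterSystem M W) (s : B) (w : W) : BaseExtends cs s w w :=
  ⟨fun _ ↦ le_rfl, fun _ h ↦ ⟨rfl, h⟩⟩

variable {s q : B} {a w : W}

theorem BaseExtends.mul_simple (h : BaseExtends cs s a w)
    (hneg : form M (baseRoot cs s w) (simpleRoot q) < 0)
    (hlt : -1 < form M (baseRoot cs s w) (simpleRoot q)) :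
    BaseExtends cs s a (w * cs.simple q) := by
  refine ⟨fun t ↦ (h.1 t).trans ?_, fun t ht ↦ ?_⟩
  · rw [baseRoot_mul_simple, Finsupp.sub_apply, Finsupp.smul_apply, smul_eq_mul]
    have : 0 ≤ simpleRoot q t := (positive_simpleRoot q).nonneg t
    nlinarith
  · obtain ⟨hcoeff, hform⟩ := h.2 t ht
    have htq : t ≠ q := by
      rintro rfl
      linarith
    rw [baseRoot_mul_simple, map_sub, map_smul, LinearMap.sub_apply, LinearMap.smul_apply,
      form_simpleRoot_simpleRoot, Finsupp.sub_apply, Finsupp.smul_apply, simpleRoot_apply_of_ne htq,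
      smul_zero, sub_zero, smul_eq_mul]
    exact ⟨hcoeff, by nlinarith [gram_nonpos (M := M) htq.symm]⟩

theorem BaseExtends.baseRoot_ne_mul_simple (h : BaseExtends cs s a w)
    (hneg : form M (baseRoot cs s w) (simpleRoot q) < 0) :
    baseRoot cs s a ≠ baseRoot cs s (w * cs.simple q) := by
  intro heq
  have := congr($heq q)
  rw [baseRoot_mul_simple, Finsupp.sub_apply, Finsupp.smul_apply, simpleRoot_apply_self,
    smul_eq_mul] at this
  linarith [h.1 q]

/-
If the profiles agree, then the difference `v` of the two roots is isotropic, because each `t` has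
`v t = 0` or `form v α_t = 0`; hence the two roots pair to `1`, which dominance forbids.
-/
theorem BaseExtends.formProfile_ne (h : BaseExtends cs s a w) (ha : IsBase cs s a)
    (hw : IsBase cs s w) (hne : baseRoot cs s a ≠ baseRoot cs s w) :
    formProfile cs s a ≠ formProfile cs s w := by
  intro hprofile
  have hroot := (isReflectionAlong_baseRoot cs s a).isRoot
  have hroot' := (isReflectionAlong_baseRoot cs s w).isRoot
  set x := baseRoot cs s w
  set y := baseRoot cs s a
  have hzero (t : B) : (x - y) t * form M (x - y) (simpleRoot t) = 0 := by
    obtain ht | ht := le_or_gt (form M y (simpleRoot t)) (-1)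
    · rw [Finsupp.sub_apply, (h.2 t ht).1, sub_self, zero_mul]
    · have hmax : max (form M y (simpleRoot t)) (-1) = max (form M x (simpleRoot t)) (-1) :=
        congrFun hprofile t
      rw [max_eq_left ht.le] at hmax
      obtain ⟨hxy, -⟩ := (max_eq_iff.mp hmax.symm).resolve_right fun hy ↦ ht.ne hy.1
      rw [map_sub, LinearMap.sub_apply, hxy, sub_self, mul_zero]
  have hiso : form M (x - y) (x - y) = 0 := by
    rw [dual_apply]
    exact Finset.sum_eq_zero fun t _ ↦ hzero t
  have hxy : form M x y = 1 := by
    simp only [map_sub, LinearMap.sub_apply, hroot.form_self, hroot'.form_self,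
      form_comm y x] at hiso
    linarith
  refine hne (hw.eq_baseRoot_of_one_le_form hroot ha.positive_baseRoot hxy.ge (i := s) ?_ (h.1 s))
  exact lt_of_le_of_ne (hw.positive_baseRoot.nonneg s)
    (Finsupp.mem_support_iff.mp hw.isSupport_support_baseRoot.1).symm

namespace IsBase

theorem baseRoot_eq_simpleRoot_of_one_le_form (h : IsBase cs s w)
    (hform : 1 ≤ form M (baseRoot cs s w) (simpleRoot q)) : simpleRoot q = baseRoot cs s w := by
  obtain ⟨i, hi⟩ := (isReflectionAlong_baseRoot cs s w).isRoot.exists_one_le h.positive_baseRoot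
  refine h.eq_baseRoot_of_one_le_form (isRoot_simpleRoot cs q) (positive_simpleRoot q) hform
    (zero_lt_one.trans_le hi) (le_trans ?_ hi)
  obtain rfl | hne := eq_or_ne i q
  · rw [simpleRoot_apply_self]
  · rw [simpleRoot_apply_of_ne hne]
    exact zero_le_one

theorem finite_setOf_formProfile [Finite B] (cs : CoxeterSystem M W) :
    {f | ∃ s w, IsBase cs s w ∧ formProfile cs s w = f}.Finite := by
  refine (Set.Finite.pi' fun _ : B ↦
    (finite_setOf_form_abs_lt_one cs).union (Set.toFinite {1, -1})).subset ?_
  rintro _ ⟨s, w, h, rfl⟩ t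
  have hroot := (isReflectionAlong_baseRoot cs s w).isRoot
  rw [formProfile]
  obtain hle | hlt := le_or_gt (form M (baseRoot cs s w) (simpleRoot t)) (-1)
  · exact .inr (by simp [max_eq_right hle])
  rw [max_eq_left hlt.le]
  obtain hlt' | hge := lt_or_ge (form M (baseRoot cs s w) (simpleRoot t)) 1
  · exact .inl ⟨abs_lt.mpr ⟨hlt, hlt'⟩, _, _, hroot, isRoot_simpleRoot cs t, rfl⟩
  · exact .inr (.inl (by rw [h.baseRoot_eq_simpleRoot_of_one_le_form hge, hroot.form_self]))

theorem finite_setOf_formProfile_of_baseExtends [Finite B] (cs : CoxeterSystem M W) (s : B)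
    (w : W) : {f | ∃ a, IsBase cs s a ∧ BaseExtends cs s a w ∧ formProfile cs s a = f}.Finite :=
  (finite_setOf_formProfile cs).subset fun _ ⟨a, ha, _, hf⟩ ↦ ⟨s, a, ha, hf⟩

theorem length_lt_ncard_formProfile [Finite B] (h : IsBase cs s w) : cs.length w <
    {f | ∃ a, IsBase cs s a ∧ BaseExtends cs s a w ∧ formProfile cs s a = f}.ncard := by
  induction h using IsBase.induction with
  | one =>
    rw [cs.length_one, Set.ncard_pos (finite_setOf_formProfile_of_baseExtends cs s 1)]
    exact ⟨_, 1, isBase_one cs s, .refl cs s 1, rfl⟩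
  | mul_simple w q hw hwq hneg hlt ih =>
    have hfin := finite_setOf_formProfile_of_baseExtends cs s
    rw [hw.length_mul_simple hneg]
    refine (Nat.add_lt_add_right ih 1).trans_le ?_
    rw [← Set.ncard_insert_of_notMem (a := formProfile cs s (w * cs.simple q)) ?_ (hfin w)]
    · refine Set.ncard_le_ncard (Set.insert_subset ⟨_, hwq, .refl cs s _, rfl⟩ ?_) (hfin _)
      exact fun f ⟨a, ha, hext, hf⟩ ↦ ⟨a, ha, hext.mul_simple hneg hlt, hf⟩
    · rintro ⟨a, ha, hext, hf⟩
      exact (hext.mul_simple hneg hlt).formProfile_ne ha hwq (hext.baseRoot_ne_mul_simple hneg) hf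

theorem exists_length_le [Finite B] (cs : CoxeterSystem M W) :
    ∃ N, ∀ s w, IsBase cs s w → cs.length w ≤ N :=
  ⟨{f | ∃ s w, IsBase cs s w ∧ formProfile cs s w = f}.ncard, fun s _ h ↦
    h.length_lt_ncard_formProfile.le.trans <| Set.ncard_le_ncard
      (fun _ ⟨a, ha, _, hf⟩ ↦ ⟨s, a, ha, hf⟩) (finite_setOf_formProfile cs)⟩

end IsBase

end BoundedBases

section SphericalShadow

open CoxeterGeometry

namespace CoxeterGeometry

theorem exists_apply_eq_of_posDef {V : Type*} [AddCommGroup V] [Module ℝ V]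
    [FiniteDimensional ℝ V] {β : LinearMap.BilinForm ℝ V} (hβ : ∀ x, x ≠ 0 → 0 < β x x)
    (f : Module.Dual ℝ V) : ∃ x, ∀ y, β x y = f y := by
  have hinj : Function.Injective β := (injective_iff_map_eq_zero β).mpr fun x hx ↦ by
    by_contra hne
    exact (hβ x hne).ne' (by rw [hx, LinearMap.zero_apply])
  obtain ⟨x, hx⟩ := (LinearMap.injective_iff_surjective_of_finrank_eq_finrank
    Subspace.dual_finrank_eq.symm).mp hinj f
  exact ⟨x, LinearMap.congr_fun hx⟩

variable {I : Set B} {ρ : B →₀ ℝ} {u : W}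

theorem exists_form_eq_height [Finite B]
    (hI : ∀ y ∈ Finsupp.supported ℝ ℝ I, y ≠ 0 → 0 < form M y y) :
    ∃ ρ ∈ Finsupp.supported ℝ ℝ I, ∀ y ∈ Finsupp.supported ℝ ℝ I, form M ρ y = height y := by
  obtain ⟨ρ, hρ⟩ := exists_apply_eq_of_posDef
    (V := Finsupp.supported ℝ ℝ I) (β := (form M).restrict _)
    (fun x hx ↦ hI x x.2 (by simpa using hx)) (height ∘ₗ Submodule.subtype _)
  exact ⟨ρ, ρ.2, fun y hy ↦ hρ ⟨y, hy⟩⟩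

theorem mem_of_isRightDescent (hu : u ∈ Subgroup.closure (cs.simple '' I)) {t : B}
    (ht : cs.IsRightDescent u t) : t ∈ I := by
  by_contra htI
  have hneg := positive_geomRep_simpleRoot (cs.isRightDescent_iff_not_isRightDescent_mul.mp ht)
  have := hneg.nonneg t
  rw [geomRep_mul_simple_simpleRoot, Finsupp.neg_apply, geomRep_apply_of_notMem hu _ htI,
    simpleRoot_apply_self] at this
  linarith

theorem height_simpleRoot (i : B) : height (simpleRoot i) = 1 := by
  simp [height, simpleRoot]

theorem two_mul_length_le_height (hρ : ∀ i ∈ I, form M ρ (simpleRoot i) = 1)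
    (hu : u ∈ Subgroup.closure (cs.simple '' I)) :
    2 * (cs.length u : ℝ) ≤ height (ρ - geomRep cs u ρ) := by
  induction hn : cs.length u generalizing u with
  | zero => simp [cs.length_eq_zero_iff.mp hn]
  | succ n ih =>
    obtain ⟨t, ht⟩ := cs.exists_rightDescent_of_ne_one (w := u) (by rintro rfl; simp at hn)
    have htI := mem_of_isRightDescent hu ht
    obtain ⟨v, rfl⟩ : ∃ v, u = v * cs.simple t := ⟨u * cs.simple t, by simp⟩
    have hlen := cs.isRightDescent_iff.mp ht
    rw [cs.simple_mul_simple_cancel_right, hn, add_left_inj] at hlen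
    have hv : v ∈ Subgroup.closure (cs.simple '' I) :=
      (Subgroup.mul_mem_cancel_right _
        (Subgroup.subset_closure (Set.mem_image_of_mem cs.simple htI))).mp hu
    have hheight := ((isRoot_simpleRoot cs t).map v).one_le_height <|
      positive_geomRep_simpleRoot <| by
        simpa using cs.isRightDescent_iff_not_isRightDescent_mul.mp ht
    have hsplit : ρ - geomRep cs (v * cs.simple t) ρ =
        (ρ - geomRep cs v ρ) + (2 : ℝ) • geomRep cs v (simpleRoot t) := by
      rw [geomRep_mul_apply, geomRep_simple_apply, form_comm, hρ t htI, map_sub, map_smul]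
      module
    rw [hsplit, map_add, map_smul, smul_eq_mul]
    push_cast
    linarith [ih hv hlen]

theorem finite_setOf_length_le [Finite B] (cs : CoxeterSystem M W) (N : ℕ) :
    {w | cs.length w ≤ N}.Finite := by
  refine ((List.finite_length_le B N).image cs.wordProd).subset fun w hw ↦ ?_
  obtain ⟨ω, hω, rfl⟩ := cs.exists_isReduced w
  exact ⟨ω, hω.symm.trans_le hw, rfl⟩

/-
With `ρ` dual to the height on the span of `I`, the length of `u ∈ W_I` is at most
`form ρ (ρ - u ρ) / 2 ≤ form ρ ρ`.
-/
theorem spherical_of_posDef [Finite B]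
    (hI : ∀ y ∈ Finsupp.supported ℝ ℝ I, y ≠ 0 → 0 < form M y y) : Spherical cs I := by
  obtain ⟨ρ, hρI, hρ⟩ := exists_form_eq_height hI
  obtain ⟨N, hN⟩ := exists_nat_ge (form M ρ ρ)
  refine (finite_setOf_length_le cs N).subset fun u hu ↦ ?_
  have huρ : geomRep cs u ρ ∈ Finsupp.supported ℝ ℝ I := by
    rw [Finsupp.mem_supported'] at hρI ⊢
    exact fun i hi ↦ (geomRep_apply_of_notMem hu ρ hi).trans (hρI i hi)
  have hnonneg : 0 ≤ form M (ρ + geomRep cs u ρ) (ρ + geomRep cs u ρ) := by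
    obtain h | h := eq_or_ne (ρ + geomRep cs u ρ) 0
    · rw [h, map_zero]
    · exact (hI _ (Submodule.add_mem _ hρI huρ) h).le
  have hlower := two_mul_length_le_height (ρ := ρ) (fun i hi ↦
    (hρ _ (Finsupp.single_mem_supported _ _ hi)).trans (height_simpleRoot i)) hu
  rw [← hρ _ (Submodule.sub_mem _ hρI huρ)] at hlower
  simp only [map_add, map_sub, LinearMap.add_apply, form_geomRep_geomRep,
    form_comm (geomRep cs u ρ) ρ] at hnonneg hlower
  exact_mod_cast (show (cs.length u : ℝ) ≤ N by linarith)

theorem form_eq_sum [Fintype B] (x y : B →₀ ℝ) :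
    form M x y = ∑ i, ∑ j, x i * y j * gram M i j := by
  rw [form_comm, dual_apply, Finsupp.sum_fintype _ _ (by simp)]
  refine Finset.sum_congr rfl fun i _ ↦ ?_
  rw [form_simpleRoot_right, Finsupp.sum_fintype _ _ (by simp), Finset.mul_sum]
  exact Finset.sum_congr rfl fun j _ ↦ by rw [gram_comm j i]; ring

theorem form_self_eq_sum [Fintype B] {c y : B →₀ ℝ} {z : B → ℝ} (hy : ∀ i, y i = z i * c i) :
    form M y y = ∑ i, z i ^ 2 * c i * form M c (simpleRoot i) +
      ∑ i, ∑ j, -(1 / 2) * (gram M i j * c i * c j * (z i - z j) ^ 2) := by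
  have hdiag : ∑ i, z i ^ 2 * c i * form M c (simpleRoot i) =
      ∑ i, ∑ j, z i ^ 2 * c i * c j * gram M i j := by
    refine Finset.sum_congr rfl fun i _ ↦ ?_
    rw [form_simpleRoot_right, Finsupp.sum_fintype _ _ (by simp), Finset.mul_sum]
    exact Finset.sum_congr rfl fun j _ ↦ by rw [gram_comm j i]; ring
  have hswap : ∑ i, ∑ j, z i ^ 2 * c i * c j * gram M i j =
      ∑ i, ∑ j, z j ^ 2 * c i * c j * gram M i j := by
    rw [Finset.sum_comm]
    exact Finset.sum_congr rfl fun i _ ↦ Finset.sum_congr rfl fun j _ ↦ by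
      rw [gram_comm j i]; ring
  have haverage : ∑ i, z i ^ 2 * c i * form M c (simpleRoot i) =
      ∑ i, ∑ j, (1 / 2) * (z i ^ 2 + z j ^ 2) * c i * c j * gram M i j := by
    simp only [mul_add, add_mul, Finset.sum_add_distrib, mul_assoc, ← Finset.mul_sum]
      at hdiag hswap ⊢
    linarith
  rw [haverage, form_eq_sum, ← Finset.sum_add_distrib]
  refine Finset.sum_congr rfl fun i _ ↦ ?_
  rw [← Finset.sum_add_distrib]
  exact Finset.sum_congr rfl fun j _ ↦ by rw [hy i, hy j]; ring

theorem apply_eq_apply_of_irreducibleSubset {c : B →₀ ℝ} {z : B → ℝ}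
    (hc : IrreducibleSubset cs c.support)
    (hz : ∀ i j, gram M i j * c i * c j * (z i - z j) ^ 2 = 0) {i j : B} (hi : i ∈ c.support)
    (hj : j ∈ c.support) : z i = z j := by
  have hcommute : ∀ k ∈ {k | c k ≠ 0 ∧ z k = z j}, ∀ l ∈ {l | c l ≠ 0 ∧ z l ≠ z j},
      Commute (cs.simple k) (cs.simple l) := by
    rintro k ⟨hk, hkj⟩ l ⟨hl, hlj⟩
    by_contra hkl
    have hgram := ((gram_neg_iff_not_commute cs).mpr hkl).ne
    have hne : z k - z l ≠ 0 := sub_ne_zero.mpr (hkj ▸ hlj.symm)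
    exact mul_ne_zero (mul_ne_zero (mul_ne_zero hgram hk) hl) (pow_ne_zero 2 hne) (hz k l)
  have hdisjoint : Disjoint {k | c k ≠ 0 ∧ z k = z j} {l | c l ≠ 0 ∧ z l ≠ z j} :=
    Set.disjoint_left.mpr fun _ hk hl ↦ hl.2 hk.2
  obtain h | h := hc.subset_or_subset hdisjoint (fun k hk ↦ by simp_all [em]) hcommute
  · exact (h hi).2
  · exact absurd rfl (h hj).2

theorem gram_mul_sq_eq_zero [Finite B] {c y : B →₀ ℝ} {z : B → ℝ} (hc : Positive c)
    (hy : ∀ i, y i = z i * c i) (hz : ∀ i, 0 ≤ z i ^ 2 * c i * form M c (simpleRoot i))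
    (hle : form M y y ≤ 0) (i j : B) : gram M i j * c i * c j * (z i - z j) ^ 2 = 0 := by
  cases nonempty_fintype B
  have hterm (i j : B) : 0 ≤ -(1 / 2) * (gram M i j * c i * c j * (z i - z j) ^ 2) := by
    obtain rfl | hij := eq_or_ne i j
    · simp
    · have := mul_nonneg (mul_nonneg (mul_nonneg (neg_nonneg.mpr (gram_nonpos (M := M) hij))
        (hc.nonneg i)) (hc.nonneg j)) (sq_nonneg (z i - z j))
      linarith
  have hrow (i : B) : 0 ≤ ∑ j, -(1 / 2) * (gram M i j * c i * c j * (z i - z j) ^ 2) :=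
    Finset.sum_nonneg fun j _ ↦ hterm i j
  have hsum : ∑ i, ∑ j, -(1 / 2) * (gram M i j * c i * c j * (z i - z j) ^ 2) = 0 := by
    have := form_self_eq_sum (M := M) hy
    have := Finset.sum_nonneg fun i (_ : i ∈ Finset.univ) ↦ hz i
    exact le_antisymm (by linarith) (Finset.sum_nonneg fun i _ ↦ hrow i)
  have hrow_eq := (Finset.sum_eq_zero_iff_of_nonneg fun i _ ↦ hrow i).mp hsum i (Finset.mem_univ i)
  have := (Finset.sum_eq_zero_iff_of_nonneg fun j _ ↦ hterm i j).mp hrow_eq j (Finset.mem_univ j)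
  linarith

/-
If `form M y y ≤ 0` with `y i = z i * c i`, then both sums of `form_self_eq_sum` vanish term by
term, so that `z` is constant on the irreducible support of `c` and `y` is a multiple of `c`.
-/
theorem form_self_pos_of_mem_supported [Finite B] {c y : B →₀ ℝ} (hc : Positive c)
    (hirr : IrreducibleSubset cs c.support) (hself : 0 < form M c c)
    (hy : y ∈ Finsupp.supported ℝ ℝ {i | c i ≠ 0 ∧ 0 ≤ form M c (simpleRoot i)}) (hy0 : y ≠ 0) :
    0 < form M y y := by
  by_contra! hle
  rw [Finsupp.mem_supported'] at hy
  set z : B → ℝ := fun i ↦ y i / c i with hz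
  have hyz (i : B) : y i = z i * c i := by
    obtain hi | hi := eq_or_ne (c i) 0
    · rw [hy i fun h ↦ h.1 hi, hi, mul_zero]
    · exact (div_mul_cancel₀ _ hi).symm
  have hz_nonneg (i : B) : 0 ≤ z i ^ 2 * c i * form M c (simpleRoot i) := by
    by_cases hi : c i ≠ 0 ∧ 0 ≤ form M c (simpleRoot i)
    · exact mul_nonneg (mul_nonneg (sq_nonneg _) (hc.nonneg i)) hi.2
    · simp [hz, hy i hi]
  have hzero := gram_mul_sq_eq_zero hc hyz hz_nonneg hle
  obtain ⟨s, hs⟩ := Finsupp.ne_iff.mp hy0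
  rw [Finsupp.zero_apply, hyz s] at hs
  have hyc : y = z s • c := by
    ext i
    rw [hyz i, Finsupp.smul_apply, smul_eq_mul]
    obtain hi | hi := eq_or_ne (c i) 0
    · rw [hi, mul_zero, mul_zero]
    · rw [apply_eq_apply_of_irreducibleSubset hirr hzero (Finsupp.mem_support_iff.mpr hi)
        (Finsupp.mem_support_iff.mpr (right_ne_zero_of_mul hs))]
  rw [hyc, map_smul, map_smul, LinearMap.smul_apply, smul_smul, smul_eq_mul] at hle
  exact hle.not_gt (mul_pos (mul_self_pos.mpr (left_ne_zero_of_mul hs)) hself)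

theorem form_baseRoot_self (cs : CoxeterSystem M W) (s : B) (w : W) :
    form M (baseRoot cs s w) (baseRoot cs s w) = 1 := by
  rw [baseRoot, form_geomRep_geomRep, form_simpleRoot_self]

end CoxeterGeometry

theorem IsBase.spherical_shadow [Finite B] {s : B} {w : W} (h : IsBase cs s w) :
    Spherical cs {i | baseRoot cs s w i ≠ 0 ∧ 0 ≤ form M (baseRoot cs s w) (simpleRoot i)} :=
  spherical_of_posDef fun _ hy hy0 ↦ form_self_pos_of_mem_supported h.positive_baseRoot
    h.irreducibleSubset_support (form_baseRoot_self cs s w ▸ one_pos) hy hy0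

end SphericalShadow

section TwistRigidity

variable {J K L : Set B}

theorem Spherical.mono (h : Spherical cs K) (hJK : J ⊆ K) : Spherical cs J :=
  Set.Finite.subset h (Subgroup.closure_mono (Set.image_mono hJK))

theorem exists_maximalSphericalIn [Finite B] (hK : Spherical cs K) (hKJ : K ⊆ J) :
    ∃ K', K ⊆ K' ∧ MaximalSphericalIn cs K' J := by
  obtain ⟨K', hle, hmax⟩ :=
    (Set.toFinite {L | L ⊆ J ∧ Spherical cs L}).exists_le_maximal ⟨hKJ, hK⟩
  exact ⟨K', hle, hmax.prop.1, hmax.prop.2, fun L hKL hLJ hL ↦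
    (hmax.le_of_ge ⟨hLJ, hL⟩ hKL).antisymm hKL⟩

theorem perpIn_univ_subset_of_subset (hLJ : L ⊆ J) :
    perpIn cs Set.univ J ⊆ perpIn cs Set.univ L :=
  fun _ hi ↦ ⟨⟨Set.mem_univ _, fun hL ↦ hi.1.2 (hLJ hL)⟩, fun l hl ↦ hi.2 l (hLJ hl)⟩

theorem exists_irreducibleSubset_subset_union_perpIn [Finite B] (cs : CoxeterSystem M W) {k : B}
    (hk : k ∈ K) :
    ∃ L ⊆ K, k ∈ L ∧ IrreducibleSubset cs L ∧ K ⊆ L ∪ perpIn cs Set.univ L := by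
  obtain ⟨L, -, ⟨hLK, hkL, hL⟩, hmax⟩ :=
    (Set.toFinite {L | L ⊆ K ∧ k ∈ L ∧ IrreducibleSubset cs L}).exists_le_maximal
      ⟨Set.singleton_subset_iff.mpr hk, rfl, irreducibleSubset_singleton cs k⟩
  refine ⟨L, hLK, hkL, hL, fun q hq ↦ or_iff_not_imp_right.mpr fun hperp ↦ ?_⟩
  exact hmax ⟨Set.union_subset hLK (Set.singleton_subset_iff.mpr hq), .inl hkL,
    hL.union_singleton hperp⟩ Set.subset_union_left (.inr rfl)

theorem IrreducibleSubset.exists_notMem_union_perpIn (hJ : IrreducibleSubset cs J)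
    (hne : (J ∩ L).Nonempty) (hJL : ¬ J ⊆ L) : ∃ t ∈ J, t ∉ L ∪ perpIn cs Set.univ L := by
  by_contra! hno
  obtain h | h := hJ.subset_or_subset (Set.disjoint_right.mpr fun _ hi ↦ hi.1.2) hno
    fun l hl i hi ↦ (hi.2 l hl).symm
  · exact hJL h
  · obtain ⟨j, hjJ, hjL⟩ := hne
    exact (h hjJ).1.2 hjL

theorem TwistRigidIn.exists_path [Finite B] (hTR : TwistRigidIn cs Set.univ)
    (hJ : IrreducibleSubset cs J) (hns : ¬ Spherical cs J) (hKJ : K ⊆ J) (hK : Spherical cs K)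
    {k m : B} (hk : k ∈ K) (hm : m ∉ J) (hmk : ¬ Commute (cs.simple m) (cs.simple k)) :
    ∃ T : Set B, Disjoint T K ∧ Disjoint T (perpIn cs Set.univ J) ∧
      ∃ t ∈ J, Relation.ReflTransGen (fun x y ↦ x ∈ T ∧ y ∈ T ∧ Adjacent cs x y) m t := by
  obtain ⟨L, hLK, hkL, hL, hKL⟩ := exists_irreducibleSubset_subset_union_perpIn cs hk
  have hLJ := hLK.trans hKJ
  obtain ⟨t, htJ, ht⟩ := hJ.exists_notMem_union_perpIn ⟨k, hKJ hk, hkL⟩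
    fun h ↦ hns (hK.mono (h.trans hLK))
  have hm : m ∉ L ∪ perpIn cs Set.univ L := by
    rintro (h | h)
    · exact hm (hLJ h)
    · exact hmk (h.2 k hkL)
  refine ⟨_, Set.disjoint_left.mpr fun q hq hqK ↦ hq.2 (hKL hqK),
    Set.disjoint_left.mpr fun q hq hperp ↦ hq.2 (.inr (perpIn_univ_subset_of_subset hLJ hperp)),
    t, htJ, hTR L (Set.subset_univ _) hL (hK.mono hLK) m ⟨Set.mem_univ _, hm⟩ t
      ⟨Set.mem_univ _, ht⟩⟩

end TwistRigidity

section ConnectingMarkings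

open CoxeterGeometry

theorem IsBase.form_neg_of_notMem_perpIn {s q : B} {w : W} (h : IsBase cs s w)
    (hq : q ∉ (baseRoot cs s w).support)
    (hperp : q ∉ perpIn cs Set.univ (baseRoot cs s w).support) :
    form M (baseRoot cs s w) (simpleRoot q) < 0 := by
  obtain ⟨j, hj, hcomm⟩ : ∃ j ∈ (baseRoot cs s w).support,
      ¬ Commute (cs.simple j) (cs.simple q) := by
    by_contra! hno
    exact hperp ⟨⟨Set.mem_univ _, hq⟩, fun j hj ↦ (hno j hj).symm⟩
  exact (form_simpleRoot_le_gram h.positive_baseRoot (Finsupp.mem_support_iff.mp hj)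
    (Finsupp.notMem_support_iff.mp hq)).trans_lt ((gram_neg_iff_not_commute cs).mpr hcomm)

namespace Marking

variable {μ ν : Marking cs} {j q : B}

theorem supp_eq (μ : Marking cs) : μ.supp = (baseRoot cs μ.core μ.elt).support :=
  μ.isBase.support_eq μ.isSupport

theorem twoSpherical_supp (μ : Marking cs) : TwoSpherical cs μ.supp :=
  μ.supp_eq ▸ μ.isBase.twoSpherical_support

theorem irreducibleSubset_supp (μ : Marking cs) : IrreducibleSubset cs μ.supp :=
  μ.supp_eq ▸ μ.isBase.irreducibleSubset_support

/-- The marking obtained from `μ` by replacing its marker by `p`. -/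
def withMarker (μ : Marking cs) (p : B) (hp : p ∉ perpIn cs Set.univ μ.supp) : Marking cs :=
  { μ with marker := p, marker_not_perp := hp }

theorem marker_notMem_supp (hj : j ∈ μ.supp) (hadj : ¬ Adjacent cs μ.marker j) :
    μ.marker ∉ μ.supp :=
  fun h ↦ hadj (μ.twoSpherical_supp _ h _ hj)

theorem complete_of_not_adjacent (hj : j ∈ μ.supp) (hadj : ¬ Adjacent cs μ.marker j) :
    μ.Complete := by
  have hmarker := marker_notMem_supp hj hadj
  rw [supp_eq, Finset.mem_coe, Finsupp.mem_support_iff] at hj hmarker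
  refine μ.isBase.not_isOfFinOrder <|
    (form_simpleRoot_le_gram μ.isBase.positive_baseRoot hj (not_not.mp hmarker)).trans_eq ?_
  exact gram_eq_neg_one_of_not_adjacent fun h ↦ hadj h.symm

theorem semiComplete_of_adjacent (hns : ¬ Spherical cs μ.supp)
    (hadj : ∀ j ∈ μ.supp, Adjacent cs μ.marker j) : μ.SemiComplete :=
  ⟨μ.irreducibleSubset_supp.union_singleton μ.marker_not_perp,
    μ.twoSpherical_supp.union_singleton hadj, fun h ↦ hns (h.mono Set.subset_union_left)⟩

/-- `μ` can be moved through complete markings by M1 and M2, with at most one final M4, to a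
semi-complete marking whose support contains that of `μ`. -/
def ConnectsToSemiComplete (μ : Marking cs) : Prop :=
  ∃ (n : ℕ) (f : ℕ → Marking cs),
    f 0 = μ ∧
    (∀ i < n, (f i).Complete) ∧
    (∀ i < n, (MoveM1 (f i) (f (i + 1)) ∨ MoveM2 (f i) (f (i + 1))) ∨
      (MoveM4 (f i) (f (i + 1)) ∧ i + 1 = n)) ∧
    (f n).SemiComplete ∧ μ.supp ⊆ (f n).supp

theorem SemiComplete.connectsToSemiComplete (h : μ.SemiComplete) : μ.ConnectsToSemiComplete :=
  ⟨0, fun _ ↦ μ, rfl, by simp, by simp, h, subset_rfl⟩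

theorem ConnectsToSemiComplete.cons (hμ : μ.Complete) (hmove : MoveM1 μ ν ∨ MoveM2 μ ν)
    (hsub : μ.supp ⊆ ν.supp) (h : ν.ConnectsToSemiComplete) : μ.ConnectsToSemiComplete := by
  obtain ⟨n, f, rfl, hcomplete, hmoves, hsemi, hsupp⟩ := h
  refine ⟨n + 1, fun i ↦ Nat.casesOn i μ f, rfl, ?_, ?_, hsemi, hsub.trans hsupp⟩
  · rintro (_ | i) hi
    · exact hμ
    · exact hcomplete i (by omega)
  · rintro (_ | i) hi
    · exact .inl hmove
    · exact (hmoves i (by omega)).imp_right fun h ↦ ⟨h.1, by omega⟩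

theorem connectsToSemiComplete_of_commute {K : Set B} (hμ : μ.Complete)
    (hns : ¬ Spherical cs μ.supp) (hK : MaximalSphericalIn cs K μ.supp)
    (hcomm : ∀ k ∈ K, Commute (cs.simple μ.marker) (cs.simple k)) :
    μ.ConnectsToSemiComplete := by
  have hcore : μ.core ∈ μ.supp := μ.isSupport.1
  have hsupp : μ.supp = μ.supp ∪ {μ.core} :=
    (Set.union_eq_left.mpr (Set.singleton_subset_iff.mpr hcore)).symm
  let ν := μ.withMarker μ.core fun h ↦ h.1.2 hcore
  refine ⟨1, fun i ↦ Nat.casesOn i μ fun _ ↦ ν, rfl, ?_, ?_, ?_, subset_rfl⟩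
  · rintro i hi
    obtain rfl : i = 0 := by omega
    exact hμ
  · rintro i hi
    obtain rfl : i = 0 := by omega
    exact .inr ⟨⟨rfl, hμ, ⟨K, hK, hcomm⟩, hsupp⟩, rfl⟩
  · exact semiComplete_of_adjacent hns fun j hj ↦ μ.twoSpherical_supp _ hcore _ hj

theorem exists_moveM2 (hj : j ∈ μ.supp) (hadj : ¬ Adjacent cs μ.marker j)
    (hq : Adjacent cs μ.marker q)
    (hneg : form M (baseRoot cs μ.core μ.elt) (simpleRoot q) < 0)
    (hfin : IsOfFinOrder (cs.simple μ.core * (μ.elt * cs.simple q * μ.elt⁻¹))) :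
    ∃ ν : Marking cs, MoveM2 μ ν ∧ ν.Complete ∧ μ.supp ⊆ ν.supp ∧
      cs.length ν.elt = cs.length μ.elt + 1 := by
  have hbase := μ.isBase.mul_simple hneg hfin
  have hsupp : IsSupport cs μ.core (μ.elt * cs.simple q) (μ.supp ∪ {q}) := by
    rw [supp_eq, ← μ.isBase.coe_support_baseRoot_mul_simple hneg]
    exact hbase.isSupport_support_baseRoot
  let ν : Marking cs :=
    { core := μ.core
      elt := μ.elt * cs.simple q
      marker := μ.marker
      supp := μ.supp ∪ {q}
      isBase := hbase
      isSupport := hsupp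
      marker_not_perp := fun h ↦ hadj (adjacent_of_commute (h.2 j (.inl hj))) }
  have hν : ν.Complete := complete_of_not_adjacent (μ := ν) (.inl hj) hadj
  exact ⟨ν, ⟨rfl, rfl, q, .inr rfl, hq⟩, hν, Set.subset_union_left,
    μ.isBase.length_mul_simple hneg⟩

theorem connectsToSemiComplete_of_adjacent (hns : ¬ Spherical cs μ.supp)
    (hj : j ∈ μ.supp) (hadj : ¬ Adjacent cs μ.marker j) (hq : Adjacent cs μ.marker q)
    (hperp : q ∉ perpIn cs Set.univ μ.supp)
    (hneg : q ∈ μ.supp → form M (baseRoot cs μ.core μ.elt) (simpleRoot q) < 0)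
    (hext : ∀ ν : Marking cs, ν.Complete → ¬ Spherical cs ν.supp →
      cs.length ν.elt = cs.length μ.elt + 1 → ν.ConnectsToSemiComplete)
    (hnext : (∃ k ∈ μ.supp, ¬ Adjacent cs q k) →
      (μ.withMarker q hperp).ConnectsToSemiComplete) : μ.ConnectsToSemiComplete := by
  have hμ := complete_of_not_adjacent hj hadj
  by_cases hcomplete : (μ.withMarker q hperp).Complete
  · refine .cons (ν := μ.withMarker q hperp) hμ (.inl ⟨rfl, rfl, hq, hμ, hcomplete⟩) subset_rfl ?_
    by_cases hqJ : ∀ k ∈ μ.supp, Adjacent cs q k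
    · exact (semiComplete_of_adjacent (μ := μ.withMarker q hperp) hns hqJ).connectsToSemiComplete
    · exact hnext (by simpa using hqJ)
  · have hqJ : ∀ k ∈ μ.supp, Adjacent cs q k := by
      by_contra! ⟨k, hk, hqk⟩
      exact hcomplete (complete_of_not_adjacent (μ := μ.withMarker q hperp) hk hqk)
    have hform : form M (baseRoot cs μ.core μ.elt) (simpleRoot q) < 0 := by
      by_cases hqmem : q ∈ μ.supp
      · exact hneg hqmem
      · rw [supp_eq] at hqmem hperp
        exact μ.isBase.form_neg_of_notMem_perpIn hqmem hperp
    obtain ⟨ν, hmove, hν, hsub, hlen⟩ :=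
      exists_moveM2 hj hadj hq hform (not_not.mp hcomplete)
    exact .cons hμ (.inr hmove) hsub (hext ν hν (fun h ↦ hns (h.mono hsub)) hlen)

theorem connectsToSemiComplete_of_path {T : Set B} {t : B} (hns : ¬ Spherical cs μ.supp)
    (hT : Disjoint T (perpIn cs Set.univ μ.supp))
    (hneg : ∀ q ∈ T, q ∈ μ.supp → form M (baseRoot cs μ.core μ.elt) (simpleRoot q) < 0)
    (hext : ∀ ν : Marking cs, ν.Complete → ¬ Spherical cs ν.supp →
      cs.length ν.elt = cs.length μ.elt + 1 → ν.ConnectsToSemiComplete) (ht : t ∈ μ.supp)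
    (hpath : Relation.ReflTransGen (fun x y ↦ x ∈ T ∧ y ∈ T ∧ Adjacent cs x y) μ.marker t)
    (hadj : ∃ j ∈ μ.supp, ¬ Adjacent cs μ.marker j) : μ.ConnectsToSemiComplete := by
  suffices ∀ p, Relation.ReflTransGen (fun x y ↦ x ∈ T ∧ y ∈ T ∧ Adjacent cs x y) p t →
      (∃ j ∈ μ.supp, ¬ Adjacent cs p j) → ∀ hp, (μ.withMarker p hp).ConnectsToSemiComplete from
    this _ hpath hadj μ.marker_not_perp
  intro p hp
  induction hp using Relation.ReflTransGen.head_induction_on with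
  | refl =>
    rintro ⟨j, hj, htj⟩
    exact absurd (μ.twoSpherical_supp _ ht _ hj) htj
  | @head p q hpq _ ih =>
    rintro ⟨j, hj, hpj⟩ hp
    obtain ⟨-, hqT, hpq⟩ := hpq
    exact connectsToSemiComplete_of_adjacent (μ := μ.withMarker p hp) hns hj hpj hpq
      (Set.disjoint_left.mp hT hqT) (hneg q hqT) hext fun hq ↦ ih hq _

theorem exists_maximalSphericalIn_form_neg [Finite B] (μ : Marking cs) :
    ∃ K, MaximalSphericalIn cs K μ.supp ∧ ∀ q ∈ μ.supp, q ∉ K →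
      form M (baseRoot cs μ.core μ.elt) (simpleRoot q) < 0 := by
  obtain ⟨K, hshadow, hK⟩ := exists_maximalSphericalIn μ.isBase.spherical_shadow
    (J := μ.supp) fun i hi ↦ μ.supp_eq ▸ Finsupp.mem_support_iff.mpr hi.1
  refine ⟨K, hK, fun q hq hqK ↦ lt_of_not_ge fun hnonneg ↦ hqK (hshadow ⟨?_, hnonneg⟩)⟩
  rw [supp_eq] at hq
  exact Finsupp.mem_support_iff.mp hq

theorem connectsToSemiComplete_of_extensions [Finite B] (hTR : TwistRigidIn cs Set.univ)
    (hμ : μ.Complete) (hns : ¬ Spherical cs μ.supp)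
    (hext : ∀ ν : Marking cs, ν.Complete → ¬ Spherical cs ν.supp →
      cs.length ν.elt = cs.length μ.elt + 1 → ν.ConnectsToSemiComplete) :
    μ.ConnectsToSemiComplete := by
  by_cases hadj : ∀ j ∈ μ.supp, Adjacent cs μ.marker j
  · exact (semiComplete_of_adjacent hns hadj).connectsToSemiComplete
  push Not at hadj
  obtain ⟨K, hK, hneg⟩ := μ.exists_maximalSphericalIn_form_neg
  by_cases hcomm : ∀ k ∈ K, Commute (cs.simple μ.marker) (cs.simple k)
  · exact connectsToSemiComplete_of_commute hμ hns hK hcomm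
  push Not at hcomm
  obtain ⟨k, hk, hmk⟩ := hcomm
  obtain ⟨j, hj, hmj⟩ := hadj
  obtain ⟨T, hTK, hTperp, t, ht, hpath⟩ := hTR.exists_path μ.irreducibleSubset_supp hns hK.1
    hK.2.1 hk (marker_notMem_supp hj hmj) hmk
  exact connectsToSemiComplete_of_path hns hTperp
    (fun q hqT hq ↦ hneg q hq (Set.disjoint_left.mp hTK hqT)) hext ht hpath ⟨j, hj, hmj⟩

end Marking

end ConnectingMarkings

/-- If `S` is twist-rigid and `μ` is a complete marking with non-spherical
support `J`, then `μ` can be connected, through complete markings and moves M1, M2, M4 (with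
M4 occurring at most once, as the last step), to a semi-complete marking whose support
contains `J`. -/
theorem connecting_complete_to_semicomplete
    [Finite B] (cs' : CoxeterSystem M W)
    (hTR : TwistRigidIn cs' Set.univ)
    (μ : Marking cs') (hμ : μ.Complete) (hns : ¬ Spherical cs' μ.supp) :
    ∃ (n : ℕ) (f : ℕ → Marking cs'),
      f 0 = μ ∧
      (∀ i < n, (f i).Complete) ∧
      (∀ i < n, (MoveM1 (f i) (f (i + 1)) ∨ MoveM2 (f i) (f (i + 1))) ∨
        (MoveM4 (f i) (f (i + 1)) ∧ i + 1 = n)) ∧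
      (f n).SemiComplete ∧ μ.supp ⊆ (f n).supp := by
  change μ.ConnectsToSemiComplete
  obtain ⟨N, hN⟩ := IsBase.exists_length_le cs'
  induction hk : N - cs'.length μ.elt generalizing μ with
  | zero =>
    refine Marking.connectsToSemiComplete_of_extensions hTR hμ hns fun ν _ _ hlen ↦ ?_
    have := hN _ _ ν.isBase
    omega
  | succ k ih =>
    refine Marking.connectsToSemiComplete_of_extensions hTR hμ hns fun ν hν hνns hlen ↦ ?_
    exact ih ν hν hνns (by omega)
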